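/- arXiv:1611.05558 — 4 statements merged into one kernel-verified Lean document; each statement's English description precedes it below -/
import Mathlib

section
/- There exist constants c > 0 and ε₀ > 0 such that for every field K, every ε ∈ (0, ε₀), and every n ∈ ℕ, there exists a 2^n × 2^n matrix B over K with rank(B) ≤ 2^{n − c·ε²·n/log₂(1/ε)} such that B differs from the Walsh–Hadamard matrix H_n (over K) in at most 2^{(1+ε)n} entries. In other words, the rank-(2^{n − c·ε²·n/log₂(1/ε)}) rigidity of H_n over K is at most 2^{(1+ε)n}. -/
/-! Walsh–Hadamard matrices are not rigid.

Suppose `2 ≠ 0` in `K` and let `k = 2j` be even. Since `H_k² = 2^k`, the matrix `2^{-j} H_k` is an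
involution and equals `Q - P` for complementary idempotents `P`, `Q` (`exists_idempotents`). Hence
`2^{-jm} H_k^{⊗m}` is diagonal in the basis formed by tensor products of columns of `P` and `Q`, with
eigenvalue `(-1)^s`, where `s` is the number of factors taken from `P`. Two facts make this useful.

* Over that basis `s` is concentrated: all but a proportion `2 exp(-α²m/4)` of the basis vectors have
  `s` in one window of length `2αm` (`window_tail`).
* On a window of length `D` the sign `(-1)^s` is a combination of `C(s, l)` with `l ≤ D`
  (`newton_window`). The operator with eigenvalue `C(s, l)` is the sum over `l`-subsets of the `m`
  blocks of tensor products with `P` on the subset and the identity elsewhere, so it vanishes on pairs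
  of indices that differ in more than `l` blocks.

With `D ≥ 2αm` this writes `H_k^{⊗m}` as a matrix of small rank plus a matrix supported on pairs
differing in at most `D` blocks (`tensor_decomposition`). Tensoring the low-rank part with `H_r`
approximates `H_{mk+r}` (`block_construction`), and a weighted count bounds the number of changed
entries.

Taking `k = 2⌈log₂(1/ε)⌉` and `α = ε/16` gives the result with `c = 2^{-15}` and `ε₀ = 1/16`, as soon
as `n` is so large that the saving `δ = c ε² n / log₂(1/ε)` is at least `1/3` (`exists_parameters`).
For smaller `n` it suffices to lower the rank by the factor `3/4`, which changing diagonal entries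
achieves (`diagonal_change`). If `2 = 0` in `K`, then `H_n` is the all-ones matrix, of rank `1`.
-/

open scoped Classical
open Finset

noncomputable section

def ip {n : ℕ} (x y : Fin n → Bool) : ℕ :=
  (Finset.univ.filter (fun i => x i ∧ y i)).card

def wt {n : ℕ} (x : Fin n → Bool) : ℕ :=
  (Finset.univ.filter (fun i => x i)).card

def Had (K : Type) [Field K] (n : ℕ) : Matrix (Fin n → Bool) (Fin n → Bool) K :=
  Matrix.of fun x y => (-1 : K) ^ ip x y

def diffCount {n : ℕ} {K : Type} [Field K]
    (A B : Matrix (Fin n → Bool) (Fin n → Bool) K) : ℕ :=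
  Nat.card {p : (Fin n → Bool) × (Fin n → Bool) // A p.1 p.2 ≠ B p.1 p.2}

def ProbRankLE {n : ℕ} {K : Type} [Field K]
    (A : Matrix (Fin n → Bool) (Fin n → Bool) K) (ε r : ℝ) : Prop :=
  ∃ (s : Finset (Matrix (Fin n → Bool) (Fin n → Bool) K))
    (w : Matrix (Fin n → Bool) (Fin n → Bool) K → ℝ),
    (∀ M ∈ s, 0 ≤ w M) ∧ (∑ M ∈ s, w M) = 1 ∧
    (∀ M ∈ s, ((M.rank : ℝ)) ≤ r) ∧
    ∀ x y : Fin n → Bool, 1 - ε ≤ ∑ M ∈ s, (if M x y = A x y then w M else 0)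

/-! ### Rank and entries of `H_n` -/

/-- A matrix factors through a space of dimension equal to its rank. -/
theorem exists_rank_factorization {K : Type} [Field K] {ι : Type} [Fintype ι]
    (A : Matrix ι ι K) :
    ∃ (U : Matrix ι (Fin A.rank) K) (V : Matrix (Fin A.rank) ι K), A = U * V := by
  let b : Module.Basis (Fin A.rank) K (LinearMap.range A.mulVecLin) :=
    Module.finBasis K (LinearMap.range A.mulVecLin)
  refine ⟨Matrix.of fun i j => (b j : ι → K) i,
    Matrix.of fun j i => b.repr ⟨A.mulVecLin (Pi.single i 1), LinearMap.mem_range_self _ _⟩ j, ?_⟩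
  ext i i'
  have h := b.sum_repr ⟨A.mulVecLin (Pi.single i' 1), LinearMap.mem_range_self _ _⟩
  have h2 := congrFun (congrArg Subtype.val h) i
  simp only [Matrix.mulVecLin_apply, Matrix.mulVec_single_one] at h2
  rw [Matrix.col_apply] at h2
  rw [← h2, Matrix.mul_apply]
  simp only [AddSubmonoidClass.coe_finsetSum, Finset.sum_apply, Matrix.of_apply,
    Submodule.coe_smul, Pi.smul_apply, smul_eq_mul, Matrix.mulVecLin_apply,
    Matrix.mulVec_single_one]
  exact Finset.sum_congr rfl fun j _ => mul_comm _ _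

theorem rank_mul_le_card {K : Type} [Field K] {ι κ γ : Type} [Fintype ι] [Fintype γ]
    (U : Matrix κ γ K) (V : Matrix γ ι K) : (U * V).rank ≤ Fintype.card γ :=
  (Matrix.rank_mul_le_left U V).trans (Matrix.rank_le_card_width U)

theorem had_apply {K : Type} [Field K] {n : ℕ} (x y : Fin n → Bool) :
    Had K n x y = ∏ i, if (x i ∧ y i) then (-1 : K) else 1 := by
  simp [Had, ip, Finset.prod_ite]

/-- A sum of products over `β^m` is a product of sums; this computes entries of products of
tensor powers. -/
theorem sum_prod_pi {R : Type} [CommSemiring R] {β : Type} [Fintype β] {m : ℕ}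
    (f : Fin m → β → R) : ∑ z : Fin m → β, ∏ i, f i (z i) = ∏ i, ∑ b, f i b := by
  rw [Finset.prod_univ_sum, Fintype.piFinset_univ]

theorem had_mul_had {K : Type} [Field K] (n : ℕ) :
    Had K n * Had K n = (2 ^ n : K) • (1 : Matrix (Fin n → Bool) (Fin n → Bool) K) := by
  ext x y
  simp only [Matrix.mul_apply, had_apply, ← Finset.prod_mul_distrib]
  rw [sum_prod_pi (fun i (b : Bool) => (if (x i ∧ b) then (-1 : K) else 1) *
    (if (b ∧ y i) then (-1 : K) else 1))]
  have : ∀ i, (∑ b : Bool, (if (x i ∧ b) then (-1 : K) else 1) *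
      (if (b ∧ y i) then (-1 : K) else 1)) = if x i = y i then 2 else 0 := by
    intro i
    rw [Fintype.sum_bool]
    cases x i <;> cases y i <;> norm_num
  simp only [this]
  rw [Matrix.smul_apply, Matrix.one_apply, smul_eq_mul]
  split_ifs with h
  · subst h; simp
  · obtain ⟨i, hi⟩ := Function.ne_iff.mp h
    rw [mul_zero]
    exact Finset.prod_eq_zero (Finset.mem_univ i) (if_neg hi)

/-- For even `k` and `2 ≠ 0`, `2^{-k/2} H_k` is an involution, so it is diagonalised by the
complementary idempotents `P`, `1 - P`. -/
theorem exists_idempotents {K : Type} [Field K] (h2 : (2 : K) ≠ 0) (j : ℕ) :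
    ∃ P Q : Matrix (Fin (2 * j) → Bool) (Fin (2 * j) → Bool) K,
      P + Q = 1 ∧ Had K (2 * j) = (2 ^ j : K) • (Q - P) ∧ P.rank + Q.rank ≤ 2 ^ (2 * j) := by
  set H := Had K (2 * j) with hH
  have hl : (2 ^ j : K) ≠ 0 := pow_ne_zero _ h2
  set A := (2 ^ j : K)⁻¹ • H with hA
  have hAA : A * A = 1 := by
    rw [hA, Matrix.smul_mul, Matrix.mul_smul, had_mul_had, smul_smul, smul_smul]
    have : (2 ^ j : K)⁻¹ * (2 ^ j : K)⁻¹ * 2 ^ (2 * j) = 1 := by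
      field_simp; ring
    rw [this, one_smul]
  have hHA : H = (2 ^ j : K) • A := by rw [hA, smul_smul, mul_inv_cancel₀ hl, one_smul]
  refine ⟨(2 : K)⁻¹ • (1 - A), (2 : K)⁻¹ • (1 + A), ?_, ?_, ?_⟩
  · rw [← smul_add]
    have : (1 - A) + (1 + A) = (2 : K) • (1 : Matrix _ _ K) := by rw [two_smul]; abel
    rw [this, smul_smul, inv_mul_cancel₀ h2, one_smul]
  · rw [← smul_sub]
    have : (1 + A) - (1 - A) = (2 : K) • A := by rw [two_smul]; abel
    rw [this, smul_smul (2 : K)⁻¹, inv_mul_cancel₀ h2, one_smul, hHA]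
  · have h0 : ((2 : K)⁻¹ • (1 - A)) * ((2 : K)⁻¹ • (1 + A)) = 0 := by
      rw [Matrix.smul_mul, Matrix.mul_smul]
      have : (1 - A) * (1 + A) = 0 := by
        rw [sub_mul, mul_add, mul_add, hAA]; simp [add_comm]
      rw [this]; simp
    refine (Matrix.rank_add_rank_le_card_of_mul_eq_zero h0).trans ?_
    simp

/-! ### Interpolating the sign on a window -/

/-- On a window `a ≤ s ≤ a + D` the sign `(-1)^s` is a combination of `C(s, 0), ..., C(s, D)`. The
coefficients are integers, so no division is needed and the characteristic of `K` is irrelevant. -/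
theorem newton_window {K : Type} [Field K] (a D : ℕ) :
    ∃ c : ℕ → K, ∀ s, a ≤ s → s ≤ a + D →
      ∑ j ∈ Finset.range (D + 1), c j * (s.choose j : K) = (-1) ^ s := by
  -- integer coefficients: expand `(-1)^a (1-2)^{s-a}` and then each `C(s-a, i)` by Vandermonde
  let e : ℕ → ℤ := fun j => (-1) ^ a * ∑ i ∈ Finset.range (D + 1),
    if j ≤ i then (-2) ^ i * Ring.choose (-(a : ℤ)) (i - j) else 0
  refine ⟨fun j => (e j : K), fun s has hsD => ?_⟩
  have key : ∑ j ∈ Finset.range (D + 1), e j * (s.choose j : ℤ) = (-1) ^ s := by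
    have hv : ∀ i, ((s - a).choose i : ℤ) = ∑ j ∈ Finset.range (i + 1),
        (s.choose j : ℤ) * Ring.choose (-(a : ℤ)) (i - j) := by
      intro i
      have h := Ring.add_choose_eq (R := ℤ) (r := (s : ℤ)) (s := -(a : ℤ)) i (Commute.all _ _)
      rw [Finset.Nat.sum_antidiagonal_eq_sum_range_succ
        (fun p q => Ring.choose (s : ℤ) p * Ring.choose (-(a : ℤ)) q)] at h
      simp only [Ring.choose_natCast] at h
      rw [← h, ← sub_eq_add_neg, ← Nat.cast_sub has, Ring.choose_natCast]
    have hb : ((-1 : ℤ)) ^ (s - a) = ∑ i ∈ Finset.range (D + 1), (-2) ^ i * ((s - a).choose i : ℤ) := by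
      have h := add_pow (-2 : ℤ) 1 (s - a)
      norm_num at h
      rw [h]
      refine Finset.sum_subset ?_ ?_
      · intro i hi; simp at hi ⊢; omega
      · intro i _ hi
        simp at hi
        rw [Nat.choose_eq_zero_of_lt (by omega)]; simp
    calc ∑ j ∈ Finset.range (D + 1), e j * (s.choose j : ℤ)
        = (-1) ^ a * ∑ j ∈ Finset.range (D + 1), ∑ i ∈ Finset.range (D + 1),
            (if j ≤ i then (-2) ^ i * Ring.choose (-(a : ℤ)) (i - j) else 0) * (s.choose j : ℤ) := by
          rw [Finset.mul_sum]
          refine Finset.sum_congr rfl fun j _ => ?_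
          simp only [e]
          rw [mul_assoc, Finset.sum_mul]
      _ = (-1) ^ a * ∑ i ∈ Finset.range (D + 1), (-2) ^ i * ((s - a).choose i : ℤ) := by
          rw [Finset.sum_comm]
          congr 1
          refine Finset.sum_congr rfl fun i hi => ?_
          rw [hv, Finset.mul_sum]
          symm
          have hi' := Finset.mem_range.mp hi
          calc _ = ∑ j ∈ Finset.range (i + 1), (if j ≤ i then (-2) ^ i *
                Ring.choose (-(a : ℤ)) (i - j) else 0) * (s.choose j : ℤ) := by
                refine Finset.sum_congr rfl fun j hj => ?_
                rw [if_pos (by simp at hj; omega)]; ring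
            _ = _ := by
                refine Finset.sum_subset (Finset.range_subset_range.mpr (by omega)) ?_
                intro j _ hj
                rw [if_neg (by simp at hj; omega), zero_mul]
      _ = (-1) ^ s := by
          rw [← hb, ← pow_add]; congr 1; omega
  have := congrArg (Int.cast : ℤ → K) key
  push_cast at this
  exact this

/-! ### Concentration of the sign count -/

/-- Concentration: for uniform `z : β^m`, the number of coordinates in `S` lies in a window of length
`2αm` around its mean up to a proportion `2 exp(-α²m/4)`. The size of `β` is only assumed to be at
most `d`, and the count is compared with `d^m`. The starting point `a` of the window, possibly
truncated at `0`, does not depend on `D`. -/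
theorem window_tail {β : Type} [Fintype β] (S : β → Prop) (d m : ℕ) (hd : Fintype.card β ≤ d)
    (α : ℝ) (hα0 : 0 < α) (hα1 : α ≤ 1) :
    ∃ a : ℕ, ∀ D : ℕ, 2 * α * m ≤ D →
      ((Finset.univ.filter fun z : Fin m → β =>
        ¬ (a ≤ (Finset.univ.filter fun i => S (z i)).card ∧
          (Finset.univ.filter fun i => S (z i)).card ≤ a + D)).card : ℝ)
        ≤ 2 * ((d : ℝ) ^ m * Real.exp (-(α ^ 2 * m / 4))) := by
  set p : ℝ := (Finset.univ.filter S).card / Fintype.card β with hp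
  set N : (Fin m → β) → ℕ := fun z => (Finset.univ.filter fun i => S (z i)).card with hN
  have hp0 : 0 ≤ p := by positivity
  have hp1 : p ≤ 1 := by
    rw [hp]
    refine div_le_one_of_le₀ ?_ (by positivity)
    exact_mod_cast Finset.card_le_univ _
  have hsum : ∑ b : β, ((if S b then (1 : ℝ) else 0) - p) = 0 := by
    rw [Finset.sum_sub_distrib, Finset.sum_boole, Finset.sum_const, Finset.card_univ, nsmul_eq_mul]
    rcases Nat.eq_zero_or_pos (Fintype.card β) with h | h
    · have : IsEmpty β := Fintype.card_eq_zero_iff.mp h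
      simp
    · rw [hp, mul_div_cancel₀, sub_self]
      exact_mod_cast h.ne'
  have mgf : ∀ u : ℝ, |u| ≤ 1 → ∑ z : Fin m → β, Real.exp (u * (N z - p * m))
      ≤ (d : ℝ) ^ m * Real.exp (u ^ 2 * m) := by
    intro u hu
    have h1 : ∀ z : Fin m → β, Real.exp (u * (N z - p * m)) =
        ∏ i, Real.exp (u * ((if S (z i) then (1 : ℝ) else 0) - p)) := by
      intro z
      rw [← Real.exp_sum, ← Finset.mul_sum, Finset.sum_sub_distrib, Finset.sum_boole]
      simp [hN, mul_comm]
    simp only [h1]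
    rw [sum_prod_pi (fun _ b => Real.exp (u * ((if S b then (1 : ℝ) else 0) - p)))]
    rw [Finset.prod_const, Finset.card_univ, Fintype.card_fin, mul_comm (u ^ 2), Real.exp_nat_mul,
      ← mul_pow]
    refine pow_le_pow_left₀ (Finset.sum_nonneg fun _ _ => (Real.exp_pos _).le) ?_ _
    have h2 : ∀ b : β, Real.exp (u * ((if S b then (1 : ℝ) else 0) - p)) ≤
        1 + u * ((if S b then (1 : ℝ) else 0) - p) + u ^ 2 := by
      intro b
      set w := (if S b then (1 : ℝ) else 0) - p with hw
      have hw1 : |w| ≤ 1 := by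
        rw [abs_le, hw]; split_ifs <;> constructor <;> linarith
      have h3 : |u * w| ≤ 1 := by
        rw [abs_mul]; exact mul_le_one₀ hu (abs_nonneg _) hw1
      have h4 := (abs_le.mp (Real.abs_exp_sub_one_sub_id_le h3)).2
      have h5 : w ^ 2 ≤ 1 := by rwa [sq_le_one_iff_abs_le_one]
      nlinarith [sq_nonneg u]
    refine (Finset.sum_le_sum fun b _ => h2 b).trans ?_
    rw [Finset.sum_add_distrib, Finset.sum_add_distrib, ← Finset.mul_sum, hsum]
    simp only [Finset.sum_const, Finset.card_univ, nsmul_eq_mul, mul_one, mul_zero, add_zero]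
    rw [← mul_one_add]
    have hd' : (Fintype.card β : ℝ) ≤ d := by exact_mod_cast hd
    have := Real.add_one_le_exp (u ^ 2)
    gcongr
    linarith
  refine ⟨⌈p * m - α * m⌉₊, fun D hD => ?_⟩
  set a := ⌈p * m - α * m⌉₊ with ha
  -- each bad `z` deviates from the mean by at least `α m`
  have hbad : ∀ z : Fin m → β, (if ¬ (a ≤ N z ∧ N z ≤ a + D) then (1 : ℝ) else 0) ≤
      Real.exp (-(α ^ 2 * m / 2)) * (Real.exp (α / 2 * (N z - p * m)) +
        Real.exp (-(α / 2) * (N z - p * m))) := by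
    intro z
    by_cases h : a ≤ N z ∧ N z ≤ a + D
    · rw [if_neg (not_not.mpr h)]; positivity
    · rw [if_pos h, mul_add, ← Real.exp_add, ← Real.exp_add]
      rw [not_and_or, not_le, not_le] at h
      rcases h with h | h
      · have h' : (N z : ℝ) < p * m - α * m := by
          rw [ha] at h; exact Nat.lt_ceil.mp h
        have : (1 : ℝ) ≤ Real.exp (-(α ^ 2 * m / 2) + -(α / 2) * (N z - p * m)) := by
          rw [Real.one_le_exp_iff]; nlinarith
        linarith [Real.exp_pos (-(α ^ 2 * m / 2) + (α / 2) * (N z - p * m))]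
      · have h' : (a : ℝ) + D < N z := by exact_mod_cast h
        have h'' := Nat.le_ceil (p * m - α * m)
        rw [← ha] at h''
        have : (1 : ℝ) ≤ Real.exp (-(α ^ 2 * m / 2) + (α / 2) * (N z - p * m)) := by
          rw [Real.one_le_exp_iff]; nlinarith
        linarith [Real.exp_pos (-(α ^ 2 * m / 2) + -(α / 2) * (N z - p * m))]
  have h1 := mgf (α / 2) (by rw [abs_le]; constructor <;> linarith)
  have h2 := mgf (-(α / 2)) (by rw [abs_le]; constructor <;> linarith)
  rw [← Finset.sum_boole]
  refine (Finset.sum_le_sum fun z _ => hbad z).trans ?_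
  rw [← Finset.mul_sum, Finset.sum_add_distrib]
  rw [neg_sq] at h2
  have hE : Real.exp (-(α ^ 2 * m / 4)) = Real.exp (-(α ^ 2 * m / 2)) * Real.exp ((α / 2) ^ 2 * m) := by
    rw [← Real.exp_add]; congr 1; ring
  rw [hE]
  have := mul_le_mul_of_nonneg_left (add_le_add h1 h2) (Real.exp_pos (-(α ^ 2 * m / 2))).le
  linarith

/-! ### Changing the diagonal -/

/-- Bounds the number of changed entries by any nonnegative weight that is at least `1` on them. -/
theorem diffCount_le_sum {K : Type} [Field K] {n : ℕ}
    (A B : Matrix (Fin n → Bool) (Fin n → Bool) K) (w : (Fin n → Bool) → (Fin n → Bool) → ℝ)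
    (hw0 : ∀ x y, 0 ≤ w x y) (hw : ∀ x y, A x y ≠ B x y → 1 ≤ w x y) :
    (diffCount A B : ℝ) ≤ ∑ x, ∑ y, w x y := by
  rw [diffCount, Nat.card_eq_fintype_card, Fintype.card_subtype, ← Finset.sum_boole,
    ← Fintype.sum_prod_type']
  refine Finset.sum_le_sum fun p _ => ?_
  split_ifs with h
  · exact hw _ _ h
  · exact hw0 _ _

/-- The eigenspace of `H_{2j}` of larger dimension has at least half the full dimension; subtract
its eigenvalue. -/
theorem exists_half_rank_shift {K : Type} [Field K] (h2 : (2 : K) ≠ 0) (j : ℕ) :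
    ∃ μ : K, 2 * (Had K (2 * j) - μ • (1 : Matrix _ _ K)).rank ≤ 2 ^ (2 * j) := by
  obtain ⟨P, Q, h1, hH, hr⟩ := exists_idempotents h2 j
  have hsm : ∀ (c : K) (A : Matrix (Fin (2 * j) → Bool) (Fin (2 * j) → Bool) K),
      (c • A).rank ≤ A.rank := by
    intro c A
    have : c • A = A * (c • (1 : Matrix _ _ K)) := by simp
    rw [this]; exact Matrix.rank_mul_le_left _ _
  rcases le_total P.rank Q.rank with h | h
  · refine ⟨2 ^ j, ?_⟩
    have : Had K (2 * j) - (2 ^ j : K) • (1 : Matrix _ _ K) = (2 ^ j * -2 : K) • P := by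
      rw [hH, ← h1, ← smul_sub, mul_smul]
      congr 1
      rw [neg_smul, two_smul]; abel
    rw [this]
    have := hsm (2 ^ j * -2) P
    omega
  · refine ⟨-2 ^ j, ?_⟩
    have : Had K (2 * j) - (-2 ^ j : K) • (1 : Matrix _ _ K) = (2 ^ j * 2 : K) • Q := by
      rw [hH, ← h1, neg_smul, sub_neg_eq_add, ← smul_add, mul_smul]
      congr 1
      rw [two_smul]; abel
    rw [this]
    have := hsm (2 ^ j * 2) Q
    omega

theorem had_cons {K : Type} [Field K] {n : ℕ} (x y : Fin (n + 1) → Bool) :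
    Had K (n + 1) x y = (if (x 0 ∧ y 0) then (-1 : K) else 1) *
      Had K n (Fin.tail x) (Fin.tail y) := by
  rw [had_apply, had_apply, Fin.prod_univ_succ]; rfl

/-- Changing only diagonal entries already lowers the rank by a constant factor. This handles the
range of `n` in which the claimed saving in the exponent is at most `1/3`. -/
theorem diagonal_change {K : Type} [Field K] (h2 : (2 : K) ≠ 0) (n : ℕ) :
    ∃ B : Matrix (Fin n → Bool) (Fin n → Bool) K,
      (B.rank : ℝ) ≤ 3 / 4 * 2 ^ n ∧ (diffCount B (Had K n) : ℝ) ≤ 2 ^ n := by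
  have hdiag : ∀ B : Matrix (Fin n → Bool) (Fin n → Bool) K,
      (∀ x y, x ≠ y → B x y = Had K n x y) → (diffCount B (Had K n) : ℝ) ≤ 2 ^ n := by
    intro B hB
    refine (diffCount_le_sum _ _ (fun x y => if x = y then 1 else 0) ?_ ?_).trans ?_
    · intro x y; positivity
    · intro x y h
      by_cases hxy : x = y
      · simp [hxy]
      · exact absurd (hB x y hxy) h
    · simp
  obtain ⟨j, rfl | rfl⟩ := Nat.even_or_odd' n
  · obtain ⟨μ, hμ⟩ := exists_half_rank_shift h2 j
    refine ⟨_, ?_, hdiag (Had K (2 * j) - μ • (1 : Matrix _ _ K)) ?_⟩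
    · have : (2 : ℝ) * (Had K (2 * j) - μ • (1 : Matrix _ _ K)).rank ≤ 2 ^ (2 * j) := by
        exact_mod_cast hμ
      have h0 : (0 : ℝ) < 2 ^ (2 * j) := by positivity
      linarith
    · intro x y hxy
      simp [Matrix.one_apply_ne hxy]
  · obtain ⟨μ, hμ⟩ := exists_half_rank_shift h2 j
    obtain ⟨ρ, hμ, U, V, hUV⟩ : ∃ ρ : ℕ, 2 * ρ ≤ 2 ^ (2 * j) ∧
        ∃ (U : Matrix (Fin (2 * j) → Bool) (Fin ρ) K) (V : Matrix (Fin ρ) (Fin (2 * j) → Bool) K),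
          Had K (2 * j) - μ • (1 : Matrix _ _ K) = U * V :=
      ⟨_, hμ, exists_rank_factorization _⟩
    -- with `H = H_{2j}`, this is `[[H - 2μ, H], [H, -H]] = [[2(H - μ), 0], [0, 0]] + [[-H, H], [H, -H]]`
    let X : Matrix (Fin (2 * j + 1) → Bool) (Fin ρ ⊕ (Fin (2 * j) → Bool)) K :=
      Matrix.of fun x => Sum.elim (fun a => if x 0 then 0 else 2 * U (Fin.tail x) a)
        (fun v => if Fin.tail x = v then (if x 0 then 1 else -1) else 0)
    let Y : Matrix (Fin ρ ⊕ (Fin (2 * j) → Bool)) (Fin (2 * j + 1) → Bool) K :=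
      Matrix.of fun s y => Sum.elim (fun a => if y 0 then 0 else V a (Fin.tail y))
        (fun v => (if y 0 then -1 else 1) * Had K (2 * j) v (Fin.tail y)) s
    have hXY : ∀ x y, (X * Y) x y = Had K (2 * j + 1) x y -
        if x = y ∧ ¬ x 0 then 2 * μ else 0 := by
      intro x y
      have hu : Had K (2 * j) (Fin.tail x) (Fin.tail y) -
          μ * (if Fin.tail x = Fin.tail y then 1 else 0) =
          ∑ a, U (Fin.tail x) a * V a (Fin.tail y) := by
        have := congrFun (congrFun hUV (Fin.tail x)) (Fin.tail y)
        rw [Matrix.mul_apply] at this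
        rw [← this, Matrix.sub_apply, Matrix.smul_apply, Matrix.one_apply, smul_eq_mul]
      have hxy : (x = y) ↔ (x 0 = y 0 ∧ Fin.tail x = Fin.tail y) := by
        constructor
        · rintro rfl; exact ⟨rfl, rfl⟩
        · rintro ⟨h, h'⟩
          rw [← Fin.cons_self_tail x, ← Fin.cons_self_tail y, h, h']
      rw [had_cons, Matrix.mul_apply, Fintype.sum_sum_type]
      simp only [X, Y, Matrix.of_apply, Sum.elim_inl, Sum.elim_inr, ite_mul, zero_mul,
        Finset.sum_ite_eq, Finset.mem_univ, if_true, hxy]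
      cases hx : x 0 <;> cases hy : y 0
      · simp only [Bool.false_eq_true, if_false, mul_assoc, ← Finset.mul_sum, ← hu]
        by_cases ht : Fin.tail x = Fin.tail y
        · simp [ht]; ring
        · simp [ht]; ring
      all_goals simp
    refine ⟨X * Y, ?_, hdiag _ ?_⟩
    · have h1 : (X * Y).rank ≤ ρ + 2 ^ (2 * j) := by
        refine (rank_mul_le_card X Y).trans ?_
        simp
      have h3 : ((X * Y).rank : ℝ) ≤ ρ + 2 ^ (2 * j) := by exact_mod_cast h1
      have h4 : (2 : ℝ) * ρ ≤ 2 ^ (2 * j) := by exact_mod_cast hμ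
      rw [pow_succ]
      linarith
    · intro x y hxy
      rw [hXY, if_neg (fun h => hxy h.1), sub_zero]

/-! ### The spectral decomposition of `H_{2j}^{⊗m}` -/

/-- `H_{2j}^{⊗m} = L + G`, where `L` has small rank and `G` vanishes on pairs that differ in more
than `D` blocks. Here `G` is the part of the spectral expansion in which the sign `(-1)^s` is
replaced by the degree-`D` combination of binomials, and `L` is the error, which is supported on
the eigenvectors whose sign count `s` leaves the window. -/
theorem tensor_decomposition {K : Type} [Field K] (h2 : (2 : K) ≠ 0) (j m D : ℕ)
    (α : ℝ) (hα0 : 0 < α) (hα1 : α ≤ 1) (hD : 2 * α * m ≤ D) :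
    ∃ L G : Matrix (Fin m → Fin (2 * j) → Bool) (Fin m → Fin (2 * j) → Bool) K,
      (∀ x y, L x y + G x y = ∏ i, Had K (2 * j) (x i) (y i)) ∧
      (L.rank : ℝ) ≤ 2 * ((2 ^ (2 * j) : ℝ) ^ m * Real.exp (-(α ^ 2 * m / 4))) ∧
      ∀ x y, D < (Finset.univ.filter fun i => x i ≠ y i).card → G x y = 0 := by
  obtain ⟨P, Q, h1, hH, hr⟩ := exists_idempotents h2 j
  obtain ⟨U, V, hP⟩ := exists_rank_factorization P
  obtain ⟨U', V', hQ⟩ := exists_rank_factorization Q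
  let S : (Fin (2 * j) → Bool) → Fin P.rank ⊕ Fin Q.rank → K := fun x => Sum.elim (U x) (U' x)
  let R : Fin P.rank ⊕ Fin Q.rank → (Fin (2 * j) → Bool) → K :=
    fun b y => Sum.elim (fun a => V a y) (fun a => V' a y) b
  obtain ⟨isP, hisl, hisr⟩ : ∃ isP : Fin P.rank ⊕ Fin Q.rank → Prop,
      (∀ a, isP (Sum.inl a)) ∧ ∀ a, ¬ isP (Sum.inr a) :=
    ⟨fun b => b.isLeft, fun _ => rfl, fun _ h => nomatch h⟩
  have hPs : ∀ x y, ∑ a, U x a * V a y = P x y := fun x y => by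
    rw [← Matrix.mul_apply, ← hP]
  have hQs : ∀ x y, ∑ a, U' x a * V' a y = Q x y := fun x y => by
    rw [← Matrix.mul_apply, ← hQ]
  have hone : ∀ x y, ∑ b, S x b * R b y = (1 : Matrix _ _ K) x y := by
    intro x y
    rw [Fintype.sum_sum_type, ← h1, Matrix.add_apply, ← hPs, ← hQs]
    rfl
  have hsgn : ∀ x y, ∑ b, S x b * (if isP b then -1 else 1) * R b y = (Q - P) x y := by
    intro x y
    rw [Fintype.sum_sum_type, Matrix.sub_apply, ← hPs, ← hQs]
    simp [S, R, hisl, hisr]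
    ring
  obtain ⟨a, ha⟩ := window_tail isP (2 ^ (2 * j)) m (by simpa using hr) α hα0 hα1
  have hbad := ha D hD
  obtain ⟨c, hc⟩ := newton_window (K := K) a D
  let N : (Fin m → Fin P.rank ⊕ Fin Q.rank) → ℕ :=
    fun z => (Finset.univ.filter fun i => isP (z i)).card
  let F : (Fin m → Fin P.rank ⊕ Fin Q.rank) → K :=
    fun z => ∑ l ∈ Finset.range (D + 1), c l * ((N z).choose l : K)
  let l : K := (2 ^ j) ^ m
  refine ⟨Matrix.of fun x y => l * ∑ z, (∏ i, S (x i) (z i)) * ((-1) ^ N z - F z) *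
      ∏ i, R (z i) (y i),
    Matrix.of fun x y => l * ∑ z, (∏ i, S (x i) (z i)) * F z * ∏ i, R (z i) (y i), ?_, ?_, ?_⟩
  · intro x y
    simp only [Matrix.of_apply]
    rw [← mul_add, ← Finset.sum_add_distrib]
    have : ∀ z : Fin m → Fin P.rank ⊕ Fin Q.rank,
        (∏ i, S (x i) (z i)) * ((-1) ^ N z - F z) * (∏ i, R (z i) (y i)) +
        (∏ i, S (x i) (z i)) * F z * (∏ i, R (z i) (y i)) =
        ∏ i, S (x i) (z i) * (if isP (z i) then -1 else 1) * R (z i) (y i) := by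
      intro z
      rw [Finset.prod_mul_distrib, Finset.prod_mul_distrib]
      have : (∏ i, if isP (z i) then (-1 : K) else 1) = (-1) ^ N z := by
        rw [Finset.prod_ite, Finset.prod_const, Finset.prod_const, one_pow, mul_one]
      rw [this]; ring
    simp only [this]
    rw [sum_prod_pi (fun i b => S (x i) b * (if isP b then -1 else 1) * R b (y i))]
    simp only [hsgn, hH, Matrix.smul_apply, smul_eq_mul]
    rw [Finset.prod_mul_distrib, Finset.prod_const, Finset.card_univ, Fintype.card_fin]
  · let bad : (Fin m → Fin P.rank ⊕ Fin Q.rank) → Prop := fun z => ¬ (a ≤ N z ∧ N z ≤ a + D)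
    let X : Matrix (Fin m → Fin (2 * j) → Bool) {z // bad z} K :=
      Matrix.of fun x z => l * ∏ i, S (x i) (z.1 i)
    let Y : Matrix {z // bad z} (Fin m → Fin (2 * j) → Bool) K :=
      Matrix.of fun z y => ((-1) ^ N z.1 - F z.1) * ∏ i, R (z.1 i) (y i)
    have hXY : (Matrix.of fun x y => l * ∑ z, (∏ i, S (x i) (z i)) * ((-1) ^ N z - F z) *
        ∏ i, R (z i) (y i)) = X * Y := by
      ext x y
      rw [Matrix.mul_apply]
      simp only [X, Y, Matrix.of_apply]
      rw [Finset.mul_sum]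
      have hz : ∀ z, ¬ bad z → (-1) ^ N z - F z = 0 := by
        intro z h
        have h' := not_not.mp h
        exact sub_eq_zero.mpr (hc _ h'.1 h'.2).symm
      refine Eq.trans ?_ (Finset.sum_subtype (Finset.univ.filter bad) (by simp)
        (fun z => l * (∏ i, S (x i) (z i)) * (((-1) ^ N z - F z) * ∏ i, R (z i) (y i))))
      rw [Finset.sum_filter]
      refine Finset.sum_congr rfl fun z _ => ?_
      by_cases h : bad z
      · rw [if_pos h]; ring
      · rw [if_neg h, hz z h]; ring
    rw [hXY]
    refine le_trans ?_ (hbad.trans_eq ?_)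
    · have := rank_mul_le_card X Y
      rw [Fintype.card_subtype] at this
      refine le_trans (Nat.cast_le.mpr this) (le_of_eq ?_)
      congr
    · push_cast; rfl
  · intro x y hxy
    simp only [Matrix.of_apply]
    have hF : ∀ z, F z = ∑ l ∈ Finset.range (D + 1), ∑ J ∈ Finset.powersetCard l Finset.univ,
        c l * ∏ i, if (i ∈ J → isP (z i)) then (1 : K) else 0 := by
      intro z
      refine Finset.sum_congr rfl fun l _ => ?_
      rw [← Finset.mul_sum]
      congr 1
      have hprod : ∀ J : Finset (Fin m), (∏ i, if (i ∈ J → isP (z i)) then (1 : K) else 0) =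
          if J ⊆ Finset.univ.filter (fun i => isP (z i)) then 1 else 0 := by
        intro J
        rw [Finset.prod_boole]
        simp [Finset.subset_iff]
      rw [Finset.sum_congr rfl fun J _ => hprod J, Finset.sum_boole, ← Finset.card_powersetCard]
      congr 2
      ext J
      simp [Finset.mem_powersetCard, and_comm]
    -- each term of `G` is a tensor product with identity factors off a set `J` of size at most `D`
    have hJ : ∀ J : Finset (Fin m), J.card ≤ D →
        ∑ z : Fin m → Fin P.rank ⊕ Fin Q.rank, ∏ i, (S (x i) (z i) *
          (if (i ∈ J → isP (z i)) then (1 : K) else 0) * R (z i) (y i)) = 0 := by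
      intro J hJ
      rw [sum_prod_pi (fun i b => S (x i) b * (if (i ∈ J → isP b) then (1 : K) else 0) *
        R b (y i))]
      obtain ⟨i, hi, hiJ⟩ := Finset.exists_mem_notMem_of_card_lt_card (hJ.trans_lt hxy)
      refine Finset.prod_eq_zero (Finset.mem_univ i) ?_
      simp only [hiJ, false_imp_iff, if_true, mul_one]
      rw [hone, Matrix.one_apply_ne (by simpa using hi)]
    have : ∑ z, (∏ i, S (x i) (z i)) * F z * ∏ i, R (z i) (y i) =
        ∑ l ∈ Finset.range (D + 1), ∑ J ∈ Finset.powersetCard l Finset.univ,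
          c l * ∑ z : Fin m → Fin P.rank ⊕ Fin Q.rank, ∏ i, (S (x i) (z i) *
          (if (i ∈ J → isP (z i)) then (1 : K) else 0) * R (z i) (y i)) := by
      simp only [hF, Finset.mul_sum, Finset.sum_mul]
      rw [Finset.sum_comm]
      refine Finset.sum_congr rfl fun l _ => ?_
      rw [Finset.sum_comm]
      refine Finset.sum_congr rfl fun J _ => Finset.sum_congr rfl fun z _ => ?_
      rw [Finset.prod_mul_distrib, Finset.prod_mul_distrib]
      ring
    rw [this]
    refine mul_eq_zero_of_right _ (Finset.sum_eq_zero fun l hl => Finset.sum_eq_zero fun J hJl => ?_)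
    rw [hJ J, mul_zero]
    have := (Finset.mem_powersetCard.mp hJl).2
    have := Finset.mem_range.mp hl
    omega

/-! ### The block construction -/

/-- Splitting off the last `r` coordinates and cutting the others into `m` blocks of length `k`. -/
def blocks (m k r : ℕ) : (Fin (m * k + r) → Bool) ≃ (Fin m → Fin k → Bool) × (Fin r → Bool) :=
  ((Equiv.arrowCongr finSumFinEquiv.symm (Equiv.refl Bool)).trans
    (Equiv.sumArrowEquivProdArrow (Fin (m * k)) (Fin r) Bool)).trans
    (Equiv.prodCongr ((Equiv.arrowCongr finProdFinEquiv.symm (Equiv.refl Bool)).trans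
      (Equiv.curry (Fin m) (Fin k) Bool)) (Equiv.refl _))

theorem had_blocks {K : Type} [Field K] (m k r : ℕ) (x y : Fin (m * k + r) → Bool) :
    Had K (m * k + r) x y =
      (∏ i, Had K k ((blocks m k r x).1 i) ((blocks m k r y).1 i)) *
        Had K r (blocks m k r x).2 (blocks m k r y).2 := by
  simp only [had_apply]
  rw [← Equiv.prod_comp finSumFinEquiv, Fintype.prod_sum_type, ← Equiv.prod_comp finProdFinEquiv,
    Fintype.prod_prod_type]
  rfl

/-- The approximation of `H_n` for `n = 2jm + r`. The changed entries are counted by a Chernoff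
argument: a pair differing in `w ≤ D` blocks has weight `2^{4jD} 2^{-4jw} ≥ 1`, and these weights
factor over the blocks. -/
theorem block_construction {K : Type} [Field K] (h2 : (2 : K) ≠ 0) (j m r D : ℕ)
    (α : ℝ) (hα0 : 0 < α) (hα1 : α ≤ 1) (hD : 2 * α * m ≤ D) :
    ∃ B : Matrix (Fin (m * (2 * j) + r) → Bool) (Fin (m * (2 * j) + r) → Bool) K,
      (B.rank : ℝ) ≤ 2 * 2 ^ (m * (2 * j) + r) * Real.exp (-(α ^ 2 * m / 4)) ∧
      (diffCount B (Had K (m * (2 * j) + r)) : ℝ) ≤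
        2 ^ (m * (2 * j) + r) * 2 ^ r * 2 ^ (4 * j * D) * (1 + 1 / 2 ^ (2 * j)) ^ m := by
  obtain ⟨L, G, hLG, hL, hG⟩ := tensor_decomposition h2 j m D α hα0 hα1 hD
  obtain ⟨U, V, hUV⟩ := exists_rank_factorization L
  set e := blocks m (2 * j) r
  set d : ℝ := 2 ^ (2 * j) with hd
  have hd1 : 1 ≤ d := one_le_pow₀ (by norm_num)
  obtain ⟨τ, hτ⟩ : ∃ τ : (Fin (2 * j) → Bool) → (Fin (2 * j) → Bool) → ℝ,
      ∀ a b, τ a b = if a = b then 1 else 1 / d ^ 2 := ⟨fun a b => _, fun _ _ => rfl⟩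
  have hτ0 : ∀ a b, 0 ≤ τ a b := fun a b => by rw [hτ]; positivity
  refine ⟨(Matrix.kroneckerMap (· * ·) L (Had K r)).submatrix e e, ?_, ?_⟩
  · rw [Matrix.rank_submatrix]
    have h3 := Matrix.mul_kronecker_mul U V (1 : Matrix (Fin r → Bool) (Fin r → Bool) K) (Had K r)
    rw [← hUV, Matrix.one_mul] at h3
    have h4 : (Matrix.kroneckerMap (· * ·) L (Had K r)).rank ≤ L.rank * 2 ^ r := by
      rw [h3]
      refine (rank_mul_le_card _ _).trans ?_
      simp
    have h5 : ((Matrix.kroneckerMap (· * ·) L (Had K r)).rank : ℝ) ≤ L.rank * 2 ^ r := by exact_mod_cast h4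
    refine h5.trans ((mul_le_mul_of_nonneg_right hL (by positivity)).trans_eq ?_)
    rw [pow_add, mul_comm m, pow_mul]; ring
  · refine (diffCount_le_sum _ _ (fun x y => 2 ^ (4 * j * D) *
      ∏ i, τ ((e x).1 i) ((e y).1 i)) ?_ ?_).trans ?_
    · exact fun x y => mul_nonneg (by positivity) (Finset.prod_nonneg fun i _ => hτ0 _ _)
    · intro x y hxy
      have hle : (Finset.univ.filter fun i => (e x).1 i ≠ (e y).1 i).card ≤ D := by
        by_contra! h
        apply hxy
        have := hLG (e x).1 (e y).1
        rw [hG _ _ h, add_zero] at this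
        rw [had_blocks, ← this]
        rfl
      simp only [hτ]
      rw [Finset.prod_ite, Finset.prod_const_one, one_mul, Finset.prod_const, one_div, inv_pow]
      have : (2 : ℝ) ^ (4 * j * D) = (d ^ 2) ^ D := by
        rw [hd, ← pow_mul, ← pow_mul]; congr 1; ring
      rw [this, ← div_eq_mul_inv, one_le_div (by positivity)]
      exact pow_le_pow_right₀ (one_le_pow₀ hd1) hle
    · have hsum : ∑ x, ∑ y, ((2 : ℝ) ^ (4 * j * D) *
          ∏ i, τ ((e x).1 i) ((e y).1 i)) =
          2 ^ (4 * j * D) * ∑ p : (Fin m → Fin (2 * j) → Bool) × (Fin r → Bool),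
            ∑ q : (Fin m → Fin (2 * j) → Bool) × (Fin r → Bool),
            ∏ i, τ (p.1 i) (q.1 i) := by
        simp only [← Finset.mul_sum]
        congr 1
        rw [← Equiv.sum_comp e]
        refine Finset.sum_congr rfl fun x _ => ?_
        rw [← Equiv.sum_comp e]
      have hq : ∀ p : (Fin m → Fin (2 * j) → Bool) × (Fin r → Bool),
          ∑ q : (Fin m → Fin (2 * j) → Bool) × (Fin r → Bool),
            (∏ i, τ (p.1 i) (q.1 i)) ≤ 2 ^ r * (1 + 1 / d) ^ m := by
        intro p
        rw [Fintype.sum_prod_type]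
        simp only [Finset.sum_const, Finset.card_univ, nsmul_eq_mul]
        rw [← Finset.mul_sum, sum_prod_pi (fun i b => τ (p.1 i) b)]
        have hb : ∀ i, ∑ b, τ (p.1 i) b ≤ 1 + 1 / d := by
          intro i
          have : ∀ b, τ (p.1 i) b ≤
              (if p.1 i = b then 1 else 0) + 1 / d ^ 2 := by
            intro b
            have : 0 < 1 / d ^ 2 := by positivity
            rw [hτ]
            split_ifs <;> linarith
          refine (Finset.sum_le_sum fun b _ => this b).trans_eq ?_
          rw [Finset.sum_add_distrib]
          simp
          rw [← hd]
          field_simp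
        have : (Fintype.card (Fin r → Bool) : ℝ) = 2 ^ r := by simp
        rw [this]
        refine mul_le_mul_of_nonneg_left ?_ (by positivity)
        refine (Finset.prod_le_prod (fun i _ => Finset.sum_nonneg fun b _ => hτ0 _ _)
          fun i _ => hb i).trans_eq ?_
        simp
      rw [hsum]
      have := Finset.sum_le_sum fun p (_ : p ∈ Finset.univ) => hq p
      refine (mul_le_mul_of_nonneg_left this (by positivity)).trans_eq ?_
      rw [Finset.sum_const, Finset.card_univ, nsmul_eq_mul, ← Fintype.card_congr e]
      simp
      ring

/-! ### Choice of parameters -/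

/-- If `2 = 0` in `K` then `H_n` is the all-ones matrix. -/
theorem char_two_case {K : Type} [Field K] (h2 : (2 : K) = 0) (n : ℕ) :
    ∃ B : Matrix (Fin n → Bool) (Fin n → Bool) K, B.rank ≤ 1 ∧ diffCount B (Had K n) = 0 := by
  refine ⟨Had K n, ?_, ?_⟩
  · have h1 : (-1 : K) = 1 := by
      rw [neg_eq_iff_add_eq_zero, one_add_one_eq_two, h2]
    have : Had K n = Matrix.vecMulVec (fun _ => 1) (fun _ => 1) := by
      ext x y
      simp [Had, Matrix.vecMulVec_apply, h1]
    rw [this]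
    exact Matrix.rank_vecMulVec_le _ _
  · simp [diffCount]

/-- The block length, number of blocks and window width for which `block_construction` gives the
stated bounds, once `n` is large enough that the claimed saving `δ` is at least `1/3`. -/
theorem exists_parameters (ε : ℝ) (hε : 0 < ε) (hε1 : ε < 1 / 16) (n : ℕ) (L δ : ℝ)
    (hL : (2 : ℝ) ^ L = 1 / ε) (hL4 : 4 ≤ L) (hδ : δ = 1 / 32768 * ε ^ 2 * n / L)
    (hδ3 : 1 / 3 ≤ δ) :
    ∃ j m r D : ℕ, m * (2 * j) + r = n ∧ 2 * (ε / 16) * m ≤ D ∧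
      1 + δ ≤ (ε / 16) ^ 2 * m / 4 ∧ (1 : ℝ) / 2 ^ (2 * j) ≤ ε ∧
      (r : ℝ) + 4 * j * D + 2 * (ε * m) ≤ ε * n := by
  have hL0 : 0 < L := by linarith
  obtain ⟨j, hj⟩ : ∃ j, j = ⌈L⌉₊ := ⟨_, rfl⟩
  have hj1 : L ≤ j := hj ▸ Nat.le_ceil L
  have hj2 : (j : ℝ) < L + 1 := hj ▸ Nat.ceil_lt_add_one hL0.le
  obtain ⟨m, hm⟩ : ∃ m, m = n / (2 * j) := ⟨_, rfl⟩
  obtain ⟨r, hr⟩ : ∃ r, r = n % (2 * j) := ⟨_, rfl⟩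
  obtain ⟨D, hD⟩ : ∃ D, D = ⌈2 * (ε / 16) * m⌉₊ := ⟨_, rfl⟩
  have hD1 : 2 * (ε / 16) * m ≤ D := hD ▸ Nat.le_ceil _
  have hD2 : (D : ℝ) < 2 * (ε / 16) * m + 1 := hD ▸ Nat.ceil_lt_add_one (by positivity)
  have hmr : m * (2 * j) + r = n := by rw [hm, hr]; exact Nat.div_add_mod' _ _
  have hjpos : 0 < j := by
    have : (0 : ℝ) < j := by linarith
    exact_mod_cast this
  have hrlt : r < 2 * j := by rw [hr]; exact Nat.mod_lt _ (by omega)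
  have hmr' : (m : ℝ) * (2 * j) + r = n := by exact_mod_cast hmr
  have hrlt' : (r : ℝ) < 2 * j := by exact_mod_cast hrlt
  have hr0 : (0 : ℝ) ≤ r := by positivity
  have hm0 : (0 : ℝ) ≤ m := by positivity
  have hn1 : 32768 / 3 * L ≤ ε ^ 2 * n := by
    rw [hδ, le_div_iff₀ hL0] at hδ3
    linarith
  have hεn : 24 * L ≤ ε * n := by
    have h : ε * (ε * n) ≤ 1 * (ε * n) := by gcongr; linarith
    nlinarith
  have hn2 : 24 * L ≤ n := by
    have h : ε * (n : ℝ) ≤ 1 * n := by gcongr; linarith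
    linarith
  have hmpos : (1 : ℝ) ≤ m := by
    have : 0 < m := by
      rw [hm]
      refine Nat.div_pos ?_ (by omega)
      have : ((2 * j : ℕ) : ℝ) ≤ n := by push_cast; linarith
      exact_mod_cast this
    exact_mod_cast this
  refine ⟨j, m, r, D, hmr, hD1, ?_, ?_, ?_⟩
  · have h1 : (n : ℝ) ≤ 8 * L * m := by nlinarith
    have h2 : 4 * δ ≤ (ε / 16) ^ 2 * m / 4 := by
      have : ε ^ 2 * n / L ≤ ε ^ 2 * (8 * m) := by
        rw [div_le_iff₀ hL0]
        nlinarith [sq_nonneg ε]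
      have h3 : δ = 1 / 32768 * (ε ^ 2 * n / L) := by rw [hδ]; ring
      rw [h3]
      nlinarith
    linarith
  · have h1 : (1 : ℝ) / ε ≤ 2 ^ (2 * j) := by
      rw [← hL, ← Real.rpow_natCast]
      refine Real.rpow_le_rpow_of_exponent_le (by norm_num) ?_
      push_cast; linarith
    rw [one_div]
    exact inv_le_of_inv_le₀ hε (by rwa [one_div] at h1)
  · have h1 : (m : ℝ) * 8 ≤ n := by nlinarith
    have h2 : 4 * (j : ℝ) * D ≤ 4 * j * (2 * (ε / 16) * m + 1) := by gcongr
    have h3 : ε * ((m : ℝ) * (2 * j)) ≤ ε * n := by gcongr; linarith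
    have h4 : ε * ((m : ℝ) * 8) ≤ ε * n := by gcongr
    nlinarith

theorem exp_le_two_rpow (y : ℝ) (hy : 0 ≤ y) : Real.exp y ≤ 2 ^ (2 * y) := by
  rw [Real.rpow_def_of_pos (by norm_num)]
  refine Real.exp_le_exp.mpr ?_
  nlinarith [Real.log_two_gt_d9]

theorem two_rpow_le_exp (y : ℝ) (hy : 0 ≤ y) : (2 : ℝ) ^ y ≤ Real.exp y := by
  rw [Real.rpow_def_of_pos (by norm_num)]
  refine Real.exp_le_exp.mpr ?_
  nlinarith [Real.log_two_lt_d9]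

/-- Non-rigidity of Hadamard matrices (Theorem 1.1 / nonrigid-IP2). -/
theorem hadamard_not_rigid :
    ∃ c ε₀ : ℝ, 0 < c ∧ 0 < ε₀ ∧
      ∀ (K : Type) [Field K], ∀ ε : ℝ, 0 < ε → ε < ε₀ → ∀ n : ℕ,
        ∃ B : Matrix (Fin n → Bool) (Fin n → Bool) K,
          (B.rank : ℝ) ≤ 2 ^ ((n : ℝ) - c * ε ^ 2 * n / Real.logb 2 (1 / ε)) ∧
          (diffCount B (Had K n) : ℝ) ≤ 2 ^ ((1 + ε) * n) := by
  refine ⟨1 / 32768, 1 / 16, by norm_num, by norm_num, ?_⟩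
  intro K _ ε hε hε1 n
  obtain ⟨L, hLdef⟩ : ∃ L, L = Real.logb 2 (1 / ε) := ⟨_, rfl⟩
  rw [← hLdef]
  have hL : (2 : ℝ) ^ L = 1 / ε := by
    rw [hLdef, Real.rpow_logb (by norm_num) (by norm_num) (by positivity)]
  have hL4 : 4 ≤ L := by
    rw [hLdef, Real.le_logb_iff_rpow_le (by norm_num) (by positivity), le_div_iff₀ hε]
    norm_num
    linarith
  obtain ⟨δ, hδ⟩ : ∃ δ, δ = 1 / 32768 * ε ^ 2 * n / L := ⟨_, rfl⟩
  rw [← hδ]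
  have hδ0 : 0 ≤ δ := by rw [hδ]; positivity
  have hn0 : (0 : ℝ) ≤ n := by positivity
  by_cases h2 : (2 : K) = 0
  · obtain ⟨B, hB1, hB2⟩ := char_two_case h2 n
    refine ⟨B, ?_, ?_⟩
    · refine (show (B.rank : ℝ) ≤ 1 by exact_mod_cast hB1).trans ?_
      refine Real.one_le_rpow (by norm_num) ?_
      have : δ ≤ n := by
        rw [hδ, div_le_iff₀ (by linarith)]
        have : ε ^ 2 ≤ 1 := by nlinarith
        nlinarith
      linarith
    · rw [hB2]
      simpa using (by positivity : (0 : ℝ) ≤ 2 ^ ((1 + ε) * n))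
  rcases le_total δ (1 / 3) with hδ3 | hδ3
  · obtain ⟨B, hB1, hB2⟩ := diagonal_change h2 n
    refine ⟨B, hB1.trans ?_, hB2.trans ?_⟩
    · rw [sub_eq_neg_add, Real.rpow_add (by norm_num), Real.rpow_natCast]
      gcongr
      -- `(3/4)^3 = 27/64 ≤ 1/2`
      have h3 : (3 / 4 : ℝ) ≤ 2 ^ (-(1 / 3) : ℝ) := by
        refine le_of_pow_le_pow_left₀ (n := 3) (by norm_num) (by positivity) ?_
        rw [← Real.rpow_natCast, ← Real.rpow_natCast, ← Real.rpow_mul (by norm_num)]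
        norm_num [Real.rpow_neg_one]
      exact h3.trans (Real.rpow_le_rpow_of_exponent_le (by norm_num) (by linarith))
    · rw [← Real.rpow_natCast]
      exact Real.rpow_le_rpow_of_exponent_le (by norm_num) (by nlinarith)
  · obtain ⟨j, m, r, D, hn, hD, hrank, hd, hdiff⟩ :=
      exists_parameters ε hε hε1 n L δ hL hL4 hδ hδ3
    subst hn
    obtain ⟨B, hB1, hB2⟩ := block_construction h2 j m r D (ε / 16) (by linarith) (by linarith) hD
    refine ⟨B, hB1.trans ?_, hB2.trans ?_⟩
    · rw [sub_eq_add_neg, Real.rpow_add (by norm_num), Real.rpow_natCast, mul_comm (2 : ℝ),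
        mul_assoc]
      gcongr
      rw [Real.rpow_neg (by norm_num), Real.exp_neg, ← div_eq_mul_inv,
        ← one_div, div_le_div_iff₀ (Real.exp_pos _) (by positivity), one_mul]
      calc (2 : ℝ) * 2 ^ δ = 2 ^ (1 + δ) := by rw [Real.rpow_add (by norm_num), Real.rpow_one]
        _ ≤ Real.exp (1 + δ) := two_rpow_le_exp _ (by linarith)
        _ ≤ _ := Real.exp_le_exp.mpr hrank
    · have h1 : (1 + 1 / 2 ^ (2 * j) : ℝ) ^ m ≤ 2 ^ (2 * (ε * m)) := by
        calc (1 + 1 / 2 ^ (2 * j) : ℝ) ^ m ≤ (Real.exp ε) ^ m := by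
              gcongr
              linarith [Real.add_one_le_exp ε]
          _ = Real.exp (ε * m) := by rw [← Real.exp_nat_mul, mul_comm]
          _ ≤ _ := exp_le_two_rpow _ (by positivity)
      refine (mul_le_mul_of_nonneg_left h1 (by positivity)).trans ?_
      rw [← Real.rpow_natCast, ← Real.rpow_natCast, ← Real.rpow_natCast,
        ← Real.rpow_add (by norm_num), ← Real.rpow_add (by norm_num),
        ← Real.rpow_add (by norm_num)]
      refine Real.rpow_le_rpow_of_exponent_le (by norm_num) ?_
      push_cast at hdiff ⊢
      linarith
end
end

section
/- For any natural numbers n, r, k with r ≥ 1 and n ≥ r + k, and any integers c₁, …, c_r, there is a multivariate polynomial p ∈ ℤ[z₁,…,zₙ] of total degree at most r − 1 such that for every i ∈ {1,…,r} and every z ∈ {0,1}^n with Hamming weight |z| = k + i, p(z) = c_i. -/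
/-!
At a `0/1` point of Hamming weight `m`, the elementary symmetric polynomial of degree `d` takes the
value `m.choose d` (`eval_esymm_indicator`). So it suffices to find integers `a 0, …, a (r - 1)`
such that `m ↦ ∑ d < r, a d * m.choose d` takes prescribed values at `r` consecutive naturals. This
integrality is Newton's forward-difference argument (`exists_choose_interpolation`): by Pascal's
rule the difference operator lowers `m.choose (d + 1)` to `m.choose d`, so the coefficients of
positive index are obtained by interpolating the differences of the data, and the constant
coefficient then adjusts the first value.
-/

open scoped Classical
open Finset

noncomputable section

/-- Integer-coefficient combinations of `t ↦ t.choose d`, `d < r`, interpolate arbitrary integer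
data at the `r` consecutive points `m, …, m + r - 1`. -/
theorem exists_choose_interpolation (m r : ℕ) (c : ℕ → ℤ) :
    ∃ a : ℕ → ℤ, ∀ i < r, ∑ d ∈ range r, a d * ((m + i).choose d : ℤ) = c i := by
  induction r generalizing c with
  | zero => exact ⟨0, fun i hi => absurd hi (Nat.not_lt_zero i)⟩
  | succ r ih =>
    obtain ⟨b, hb⟩ := ih (fun i => c (i + 1) - c i)
    refine ⟨fun d => Nat.casesOn d (c 0 - ∑ d ∈ range r, b d * (m.choose (d + 1) : ℤ)) b, ?_⟩
    intro i
    induction i with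
    | zero =>
      intro _
      rw [sum_range_succ']
      simp
    | succ i ihi =>
      intro hi
      have h1 := ihi (by omega)
      have h2 := hb i (by omega)
      rw [sum_range_succ'] at h1 ⊢
      have h3 : ∑ d ∈ range r, b d * ((m + (i + 1)).choose (d + 1) : ℤ) =
          ∑ d ∈ range r, b d * ((m + i).choose d : ℤ) +
            ∑ d ∈ range r, b d * ((m + i).choose (d + 1) : ℤ) := by
        rw [← sum_add_distrib]
        refine sum_congr rfl fun d _ => ?_
        rw [← add_assoc, Nat.choose_succ_succ]
        push_cast
        ring
      simp only [Nat.choose_zero_right] at h1 ⊢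
      linarith

theorem totalDegree_esymm_le {n : ℕ} (d : ℕ) :
    (MvPolynomial.esymm (Fin n) ℤ d).totalDegree ≤ d := by
  refine MvPolynomial.totalDegree_finsetSum_le fun s hs => ?_
  refine (MvPolynomial.totalDegree_finsetProd _ _).trans ?_
  simp [(mem_powersetCard.mp hs).2]

theorem eval_esymm_indicator {n : ℕ} (d : ℕ) (z : Fin n → Bool) :
    MvPolynomial.eval (fun j => if z j then (1 : ℤ) else 0) (MvPolynomial.esymm (Fin n) ℤ d) =
      ((wt z).choose d : ℤ) := by
  simp only [MvPolynomial.esymm, map_sum, map_prod, MvPolynomial.eval_X, prod_ite_zero,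
    prod_const_one, sum_boole]
  rw [wt, ← card_powersetCard]
  congr 2
  ext s
  simp only [mem_filter, mem_powersetCard, subset_iff, mem_univ, true_and]
  tauto

/-- Multivariate polynomial interpolation on Hamming-weight levels. -/
theorem interpolation_on_weight_levels :
    ∀ n r k : ℕ, 1 ≤ r → r + k ≤ n → ∀ c : Fin r → ℤ,
      ∃ p : MvPolynomial (Fin n) ℤ,
        p.totalDegree ≤ r - 1 ∧
        ∀ i : Fin r, ∀ z : Fin n → Bool, wt z = k + (i : ℕ) + 1 →
          MvPolynomial.eval (fun j => if z j then (1 : ℤ) else 0) p = c i := by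
  intro n r k _ _ c
  obtain ⟨a, ha⟩ := exists_choose_interpolation (k + 1) r
    (fun i => if h : i < r then c ⟨i, h⟩ else 0)
  refine ⟨∑ d ∈ range r, MvPolynomial.C (a d) * MvPolynomial.esymm (Fin n) ℤ d, ?_, ?_⟩
  · refine MvPolynomial.totalDegree_finsetSum_le fun d hd => ?_
    have hd' := mem_range.mp hd
    refine (MvPolynomial.totalDegree_mul _ _).trans ?_
    rw [MvPolynomial.totalDegree_C, zero_add]
    exact (totalDegree_esymm_le d).trans (by omega)
  · intro i z hz
    simp only [map_sum, map_mul, MvPolynomial.eval_C, eval_esymm_indicator, hz]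
    have h := ha i i.isLt
    rw [dif_pos i.isLt] at h
    rw [← h, add_right_comm]
end
end

section
/- There is a constant c > 0 such that the following holds. Let n, s ≥ 1 and ε ∈ (0,1). Let w₁,…,w_s, κ ∈ ℝ, and for each i ∈ {1,…,s} let g_i : {0,1}^n × {0,1}^n → {0,1} be a linear threshold function, i.e., g_i(x,y) = 1 iff ⟨u_i,x⟩ + ⟨v_i,y⟩ ≥ θ_i for some u_i, v_i ∈ ℝ^n and θ_i ∈ ℝ. Define f : {0,1}^n × {0,1}^n → {0,1} by f(x,y) = 1 iff Σ_{i=1}^s w_i·g_i(x,y) ≤ κ (so f is computed by a depth-two linear threshold circuit with s bottom-layer gates). Then there exists a finitely supported probability distribution D on real 2^n × 2^n matrices (rows and columns indexed by {0,1}^n), each of rank at most c·s²·n²/ε, such that for every x,y ∈ {0,1}^n, Pr_{Q∼D}[Q(x,y) ≤ 0 if and only if f(x,y) = 1] ≥ 1 − ε. In particular, f has ε-probabilistic sign-rank at most c·s²·n²/ε. -/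
open scoped Classical
open Finset

noncomputable section

/-!
A linear threshold gate on `(x, y)` compares a number depending on `x` with one depending on `y`.
Only the relative order of these numbers matters, so after replacing them by their ranks among
the `2 ^ n` values of the first one, a gate compares two naturals `a`, `b` smaller than
`2 ^ (n + 1)`. At the highest bit where they differ,

`[a < b] = ∑ j ≤ n, [bit j of a is 0] * [bit j of b is 1] * [a / 2 ^ (j+1) = b / 2 ^ (j+1)]`.

Choose a uniformly random hash function `h` on the naturals below `2 ^ (n + 1)` with `k` values
and replace each equality test `p = q` by `h p = h q`. The hashed test, as a matrix in `(x, y)`,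
has rank at most `k`, it is always right if `p = q`, and errs with probability at most `1 / k`
otherwise. Since only a union bound is used, one hash function serves all `s` gates and all
`n + 1` bit positions, and the total error is at most `s * (n + 1) / k`. The threshold circuit is
the sign of a linear combination of the gates and a constant, which gives a matrix of rank at
most `1 + s * (n + 1) * k`; take `k = ⌈s * (n + 1) / ε⌉`.
-/

/-- The distribution of `Q ω` for uniform `ω`, as a weight function on its finite range: the
probability of the event `P` is the proportion of those `ω` for which `P (Q ω)` holds. -/
lemma sum_image_uniform {Ω M : Type*} [Fintype Ω] (Q : Ω → M) (P : M → Prop) :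
    ∑ m ∈ univ.image Q, (if P m then ∑ ω : Ω, (if Q ω = m then (Fintype.card Ω : ℝ)⁻¹ else 0)
      else 0) = (univ.filter fun ω => P (Q ω)).card * (Fintype.card Ω : ℝ)⁻¹ := by
  have h1 : ∀ m ∈ univ.image Q,
      (if P m then ∑ ω : Ω, (if Q ω = m then (Fintype.card Ω : ℝ)⁻¹ else 0) else 0)
      = ∑ ω : Ω, (if Q ω = m then (if P (Q ω) then (Fintype.card Ω : ℝ)⁻¹ else 0) else 0) := by
    intro m _
    split_ifs with hm
    · refine Finset.sum_congr rfl fun ω _ => ?_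
      by_cases h : Q ω = m
      · simp [h, hm]
      · simp [h]
    · symm
      refine Finset.sum_eq_zero fun ω _ => ?_
      by_cases h : Q ω = m
      · simp [h, hm]
      · simp [h]
  rw [Finset.sum_congr rfl h1, Finset.sum_comm]
  simp [Finset.sum_ite, mul_comm]

/-- A uniformly random function identifies two distinct points with probability at most `1 / k`. -/
lemma card_collision_mul_le {K : Type*} [Fintype K] [DecidableEq K] (k : ℕ) {a b : K} (hab : a ≠ b) :
    (univ.filter fun h : K → Fin k => h a = h b).card * k ≤ Fintype.card (K → Fin k) := by
  -- Resetting the value at `a` is injective on pairs (colliding function, new value).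
  have := Finset.card_le_card_of_injOn
    (s := (univ.filter fun h : K → Fin k => h a = h b) ×ˢ (univ : Finset (Fin k)))
    (t := (univ : Finset (K → Fin k)))
    (fun p => Function.update p.1 a p.2) (fun _ _ => Finset.mem_coe.2 (Finset.mem_univ _)) (by
      rintro ⟨h, c⟩ hh ⟨h', c'⟩ hh' e
      simp only [Finset.coe_product, Set.mem_prod, Finset.mem_coe, Finset.mem_filter,
        Finset.mem_univ, true_and, and_true] at hh hh'
      simp only at e
      have off : ∀ z, z ≠ a → h z = h' z := fun z hz => by
        simpa [hz] using congrFun e z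
      have hc : c = c' := by simpa using congrFun e a
      refine Prod.ext ?_ hc
      funext z
      by_cases hz : z = a
      · subst hz
        exact hh.trans ((off b hab.symm).trans hh'.symm)
      · exact off z hz)
  simpa [Finset.card_product] using this

/-- Replacing real numbers by their ranks among the values of `A` preserves all comparisons of
a `B`-value with an `A`-value. -/
lemma exists_rank {X : Type*} [Fintype X] (A B : X → ℝ) :
    ∃ α β : X → ℕ, (∀ x, α x ≤ Fintype.card X) ∧ (∀ y, β y ≤ Fintype.card X) ∧
      ∀ x y, B y ≤ A x ↔ ¬ α x < β y := by
  refine ⟨fun x => (univ.filter fun z => A z < A x).card,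
    fun y => (univ.filter fun z => A z < B y).card,
    fun x => Finset.card_le_univ _, fun y => Finset.card_le_univ _, fun x y => ?_⟩
  constructor
  · intro h
    rw [not_lt]
    refine Finset.card_le_card fun z hz => ?_
    simp only [Finset.mem_filter, Finset.mem_univ, true_and] at hz ⊢
    exact hz.trans_le h
  · contrapose!
    intro h
    refine Finset.card_lt_card (Finset.ssubset_iff_of_subset ?_ |>.2 ⟨x, ?_, ?_⟩)
    · intro z hz
      simp only [Finset.mem_filter, Finset.mem_univ, true_and] at hz ⊢
      exact hz.trans h
    · simpa using h
    · simp

/-- Comparison of two naturals below `2 ^ m` through the highest bit in which they differ. -/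
lemma lt_indicator_eq_sum (m a b : ℕ) (hb : b < 2 ^ m) :
    (if a < b then (1 : ℝ) else 0) = ∑ j ∈ Finset.range m,
      (if a / 2 ^ j % 2 = 0 then (1 : ℝ) else 0) * (if b / 2 ^ j % 2 = 1 then (1 : ℝ) else 0) *
        (if a / 2 ^ (j + 1) = b / 2 ^ (j + 1) then (1 : ℝ) else 0) := by
  have step : ∀ p q : ℕ, (if p < q then (1 : ℝ) else 0) - (if p / 2 < q / 2 then (1 : ℝ) else 0)
      = (if p % 2 = 0 then (1 : ℝ) else 0) * (if q % 2 = 1 then (1 : ℝ) else 0) *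
        (if p / 2 = q / 2 then (1 : ℝ) else 0) := by
    intro p q
    split_ifs <;> first | (exfalso; omega) | norm_num
  have tele := Finset.sum_range_sub'
    (fun j => if a / 2 ^ j < b / 2 ^ j then (1 : ℝ) else 0) m
  simp only [pow_zero, Nat.div_one, Nat.div_eq_of_lt hb, not_lt_zero, if_false, sub_zero] at tele
  rw [← tele]
  refine Finset.sum_congr rfl fun j _ => ?_
  rw [pow_succ, ← Nat.div_div_eq_div_mul, ← Nat.div_div_eq_div_mul]
  exact step _ _

/-- The hashed circuit: the linear combination of gates, shifted by a constant `C`, in which every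
equality test of prefixes is replaced by equality of hash values. Gate `i` is `1 - [α i x < β i y]`,
whence the sign and the constant. The hash function is defined on `Fin N`; `Fin.ofNat`
reduces its argument modulo `N`, which changes nothing as long as `α, β < N`. -/
def hashed {X : Type*} {s m N k : ℕ} [NeZero N] (w : Fin s → ℝ) (C : ℝ) (α β : Fin s → X → ℕ)
    (h : Fin N → Fin k) : Matrix X X ℝ :=
  Matrix.of fun x y => C - ∑ i, w i * ∑ j : Fin m,
    (if α i x / 2 ^ (j : ℕ) % 2 = 0 then (1 : ℝ) else 0) *
    (if β i y / 2 ^ (j : ℕ) % 2 = 1 then (1 : ℝ) else 0) *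
    (if h (Fin.ofNat N (α i x / 2 ^ ((j : ℕ) + 1))) = h (Fin.ofNat N (β i y / 2 ^ ((j : ℕ) + 1)))
      then (1 : ℝ) else 0)

/-- The hashed circuit factors through one constant coordinate and one coordinate for each gate,
bit position and hash value. -/
lemma rank_hashed_le {X : Type*} [Fintype X] {s m N k : ℕ} [NeZero N] (w : Fin s → ℝ) (C : ℝ)
    (α β : Fin s → X → ℕ) (h : Fin N → Fin k) :
    (hashed (m := m) w C α β h).rank ≤ s * (m * k) + 1 := by
  let L : Matrix X (Option (Fin s × Fin m × Fin k)) ℝ := Matrix.of fun x o =>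
    match o with
    | none => C
    | some (i, j, c) => -(w i) * ((if α i x / 2 ^ (j : ℕ) % 2 = 0 then (1 : ℝ) else 0) *
        (if h (Fin.ofNat N (α i x / 2 ^ ((j : ℕ) + 1))) = c then (1 : ℝ) else 0))
  let R : Matrix (Option (Fin s × Fin m × Fin k)) X ℝ := Matrix.of fun o y =>
    match o with
    | none => 1
    | some (i, j, c) => (if β i y / 2 ^ (j : ℕ) % 2 = 1 then (1 : ℝ) else 0) *
        (if c = h (Fin.ofNat N (β i y / 2 ^ ((j : ℕ) + 1))) then (1 : ℝ) else 0)
  have hLR : hashed (m := m) w C α β h = L * R := by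
    ext x y
    simp only [hashed, Matrix.mul_apply, Matrix.of_apply, Fintype.sum_option, L, R,
      Fintype.sum_prod_type, mul_one, sub_eq_add_neg, ← Finset.sum_neg_distrib, Finset.mul_sum]
    congr 1
    refine Finset.sum_congr rfl fun i _ => Finset.sum_congr rfl fun j _ => ?_
    rw [Finset.sum_eq_single (h (Fin.ofNat N (α i x / 2 ^ ((j : ℕ) + 1))))]
    · simp only [if_true]
      ring
    · intro c _ hc
      simp only [if_neg (Ne.symm hc), mul_zero, zero_mul]
    · simp
  rw [hLR]
  refine (Matrix.rank_mul_le_left L R).trans ((Matrix.rank_le_card_width L).trans ?_)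
  simp

/-- Union bound: the probability that a random hash function identifies `p i j` with `q i j` for
some pair of indices with `p i j ≠ q i j` is at most `s * m / k`. -/
lemma card_bad_mul_le {s m N k : ℕ} (p q : Fin s → Fin m → Fin N) :
    (univ.filter fun h : Fin N → Fin k => ∃ i j, p i j ≠ q i j ∧ h (p i j) = h (q i j)).card * k
      ≤ s * m * Fintype.card (Fin N → Fin k) := by
  have hsub : (univ.filter fun h : Fin N → Fin k =>
        ∃ i j, p i j ≠ q i j ∧ h (p i j) = h (q i j)) ⊆
      (univ : Finset (Fin s × Fin m)).biUnion fun ij => univ.filter fun h : Fin N → Fin k =>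
        p ij.1 ij.2 ≠ q ij.1 ij.2 ∧ h (p ij.1 ij.2) = h (q ij.1 ij.2) := by
    intro h hh
    simp only [Finset.mem_filter, Finset.mem_univ, true_and, Finset.mem_biUnion] at hh ⊢
    obtain ⟨i, j, hij⟩ := hh
    exact ⟨(i, j), hij⟩
  refine (Nat.mul_le_mul_right k ((Finset.card_le_card hsub).trans Finset.card_biUnion_le)).trans ?_
  rw [Finset.sum_mul]
  refine (Finset.sum_le_card_nsmul _ _ (Fintype.card (Fin N → Fin k)) ?_).trans (by simp)
  intro ij _
  by_cases hne : p ij.1 ij.2 = q ij.1 ij.2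
  · simp [hne]
  · simpa [hne] using card_collision_mul_le k hne

/-- If `h` separates all distinct prefixes `α i x / 2 ^ (j + 1)`, `β i y / 2 ^ (j + 1)`, the
hashed circuit is exact at `(x, y)`. -/
lemma hashed_apply_eq {X : Type*} {s m N k : ℕ} [NeZero N] (w : Fin s → ℝ) (C : ℝ)
    (α β : Fin s → X → ℕ) (h : Fin N → Fin k) (x y : X) (hNm : N = 2 ^ m)
    (hα : ∀ i, α i x < N) (hβ : ∀ i, β i y < N)
    (hh : ¬ ∃ (i : Fin s) (j : Fin m),
      Fin.ofNat N (α i x / 2 ^ ((j : ℕ) + 1)) ≠ Fin.ofNat N (β i y / 2 ^ ((j : ℕ) + 1)) ∧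
      h (Fin.ofNat N (α i x / 2 ^ ((j : ℕ) + 1))) = h (Fin.ofNat N (β i y / 2 ^ ((j : ℕ) + 1)))) :
    hashed (m := m) w C α β h x y = C - ∑ i, w i * (if α i x < β i y then (1 : ℝ) else 0) := by
  simp only [hashed, Matrix.of_apply]
  congr 1
  refine Finset.sum_congr rfl fun i _ => ?_
  rw [lt_indicator_eq_sum m (α i x) (β i y) (hNm ▸ hβ i), Finset.sum_range]
  congr 1
  refine Finset.sum_congr rfl fun j _ => ?_
  congr 1
  refine if_congr ?_ rfl rfl
  constructor
  · intro e
    by_contra hne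
    refine hh ⟨i, j, fun e' => hne ?_, e⟩
    have e'' := congrArg Fin.val e'
    simp only [Fin.ofNat] at e''
    rwa [Nat.mod_eq_of_lt ((Nat.div_le_self _ _).trans_lt (hα i)),
      Nat.mod_eq_of_lt ((Nat.div_le_self _ _).trans_lt (hβ i))] at e''
  · intro e
    rw [e]

/-- Depth-two linear threshold circuits have low probabilistic sign-rank. -/
theorem ltf_ltf_probabilistic_sign_rank :
    ∃ c : ℝ, 0 < c ∧
      ∀ n s : ℕ, 1 ≤ n → 1 ≤ s → ∀ ε : ℝ, 0 < ε → ε < 1 →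
        ∀ (w : Fin s → ℝ) (κ : ℝ) (u v : Fin s → Fin n → ℝ) (θ : Fin s → ℝ),
          ∃ (D : Finset (Matrix (Fin n → Bool) (Fin n → Bool) ℝ))
            (wgt : Matrix (Fin n → Bool) (Fin n → Bool) ℝ → ℝ),
            (∀ Q ∈ D, 0 ≤ wgt Q) ∧ (∑ Q ∈ D, wgt Q) = 1 ∧
            (∀ Q ∈ D, (Q.rank : ℝ) ≤ c * s ^ 2 * n ^ 2 / ε) ∧
            ∀ x y : Fin n → Bool,
              1 - ε ≤ ∑ Q ∈ D,
                (if (Q x y ≤ 0 ↔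
                     (∑ i, w i *
                       (if θ i ≤ (∑ j, u i j * (if x j then (1 : ℝ) else 0)) +
                                 (∑ j, v i j * (if y j then (1 : ℝ) else 0))
                        then (1 : ℝ) else 0)) ≤ κ)
                 then wgt Q else 0) := by
  refine ⟨9, by norm_num, ?_⟩
  intro n s hn hs ε hε hε1 w κ u v θ
  have hn' : (1 : ℝ) ≤ n := by exact_mod_cast hn
  have hs' : (1 : ℝ) ≤ s := by exact_mod_cast hs
  choose α β hα hβ hαβ using fun i => exists_rank
    (fun x : Fin n → Bool => ∑ j, u i j * (if x j then (1 : ℝ) else 0))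
    (fun y : Fin n → Bool => θ i - ∑ j, v i j * (if y j then (1 : ℝ) else 0))
  have hcard : Fintype.card (Fin n → Bool) < 2 ^ (n + 1) := by
    simp [pow_succ]
  obtain ⟨k, hk⟩ : ∃ k : ℕ, k = ⌈(s * (n + 1) : ℝ) / ε⌉₊ := ⟨_, rfl⟩
  have hkl : (s * (n + 1) : ℝ) / ε ≤ k := hk ▸ Nat.le_ceil _
  have hku : (k : ℝ) ≤ (s * (n + 1) : ℝ) / ε + 1 :=
    hk ▸ (Nat.ceil_lt_add_one (by positivity)).le
  have hkpos : (0 : ℝ) < k := lt_of_lt_of_le (by positivity) hkl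
  have : NeZero k := ⟨by rintro rfl; simp at hkpos⟩
  have hN : (0 : ℝ) < Fintype.card (Fin (2 ^ (n + 1)) → Fin k) := by
    exact_mod_cast Fintype.card_pos
  set Q : (Fin (2 ^ (n + 1)) → Fin k) → Matrix (Fin n → Bool) (Fin n → Bool) ℝ :=
    hashed (m := n + 1) w (∑ i, w i - κ) α β with hQ
  refine ⟨univ.image Q, fun M => ∑ h, (if Q h = M then
    (Fintype.card (Fin (2 ^ (n + 1)) → Fin k) : ℝ)⁻¹ else 0), ?_, ?_, ?_, ?_⟩
  · intro M _
    refine Finset.sum_nonneg fun h _ => ?_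
    split_ifs <;> positivity
  · have := sum_image_uniform Q (fun _ => True)
    simp only [if_true, Finset.filter_true, Finset.card_univ] at this
    rw [mul_inv_cancel₀ hN.ne'] at this
    rw [← this]
    congr!
  · intro M hM
    obtain ⟨h, -, rfl⟩ := Finset.mem_image.1 hM
    have hr : ((Q h).rank : ℝ) ≤ s * ((n + 1) * k) + 1 := by
      exact_mod_cast rank_hashed_le (m := n + 1) w (∑ i, w i - κ) α β h
    refine hr.trans ?_
    rw [le_div_iff₀ hε]
    have hsn : (1 : ℝ) ≤ s * n := by nlinarith
    have hkε : (k : ℝ) * ε ≤ 3 * (s * n) := by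
      have := mul_le_mul_of_nonneg_right hku hε.le
      rw [add_mul, div_mul_cancel₀ _ hε.ne'] at this
      nlinarith
    have h2 : (s : ℝ) * (n + 1) ≤ 2 * (s * n) := by nlinarith
    have h3 : (s : ℝ) * (n + 1) * (k * ε) ≤ 2 * (s * n) * (3 * (s * n)) :=
      mul_le_mul h2 hkε (by positivity) (by positivity)
    nlinarith
  · intro x y
    have hsum : (∑ i, w i * (if θ i ≤ (∑ j, u i j * (if x j then (1 : ℝ) else 0)) +
        (∑ j, v i j * (if y j then (1 : ℝ) else 0)) then (1 : ℝ) else 0))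
        = ∑ i, w i - ∑ i, w i * (if α i x < β i y then (1 : ℝ) else 0) := by
      rw [← Finset.sum_sub_distrib]
      refine Finset.sum_congr rfl fun i _ => ?_
      rw [if_congr (sub_le_iff_le_add.symm.trans (hαβ i x y)) rfl rfl]
      split_ifs <;> simp_all
    rw [hsum]
    refine le_of_le_of_eq ?_ ((sum_image_uniform Q (fun M => M x y ≤ 0 ↔
      ∑ i, w i - ∑ i, w i * (if α i x < β i y then (1 : ℝ) else 0) ≤ κ)).symm.trans ?_)
    swap
    · congr!
    set p : Fin s → Fin (n + 1) → Fin (2 ^ (n + 1)) :=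
      fun i j => Fin.ofNat _ (α i x / 2 ^ ((j : ℕ) + 1)) with hp
    set q : Fin s → Fin (n + 1) → Fin (2 ^ (n + 1)) :=
      fun i j => Fin.ofNat _ (β i y / 2 ^ ((j : ℕ) + 1)) with hq
    have hbad := card_bad_mul_le (k := k) p q
    have hcompl := Finset.card_filter_add_card_filter_not
      (s := (univ : Finset (Fin (2 ^ (n + 1)) → Fin k)))
      (fun h => ∃ i j, p i j ≠ q i j ∧ h (p i j) = h (q i j))
    rw [Finset.card_univ] at hcompl
    set bad := (univ.filter fun h : Fin (2 ^ (n + 1)) → Fin k =>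
      ∃ i j, p i j ≠ q i j ∧ h (p i j) = h (q i j)).card
    set T := Fintype.card (Fin (2 ^ (n + 1)) → Fin k)
    have hbad' : (bad : ℝ) ≤ ε * T := by
      have h1 : (bad : ℝ) * k ≤ s * (n + 1) * T := by exact_mod_cast hbad
      have h2 : (s * (n + 1) : ℝ) ≤ k * ε := (div_le_iff₀ hε).1 hkl
      have h3 : (bad : ℝ) * k ≤ (ε * T) * k := by nlinarith
      exact le_of_mul_le_mul_right h3 hkpos
    rw [← div_eq_mul_inv, le_div_iff₀ hN]
    have hgood : (1 - ε) * T ≤ ((univ.filter fun h : Fin (2 ^ (n + 1)) → Fin k =>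
        ¬ ∃ i j, p i j ≠ q i j ∧ h (p i j) = h (q i j)).card : ℝ) := by
      have := congrArg (Nat.cast (R := ℝ)) hcompl
      rw [Nat.cast_add] at this
      linarith
    refine hgood.trans (Nat.cast_le.2 (Finset.card_le_card ?_))
    intro h hh
    simp only [Finset.mem_filter, Finset.mem_univ, true_and] at hh ⊢
    rw [hQ, hashed_apply_eq w _ α β h x y rfl (fun i => (hα i x).trans_lt hcard)
      (fun i => (hβ i y).trans_lt hcard) hh]
    constructor <;> intro h <;> linarith
end
end

section
/- There is a constant c > 0 such that the following holds. Let K be a field, let n ≥ 1 and s ≥ 2, let S₁,…,S_s be subsets of the 2n input positions, and let φ : {0,1,…,s} → K. Define f : {0,1}^n × {0,1}^n → K by f(x,y) = φ(#{j ∈ {1,…,s} : every coordinate of (x,y) indexed by S_j equals 1}) (i.e., f is computed by a SYM∘AND circuit with s AND gates). Then for every integer r with 2 ≤ r ≤ 2^{2n}, there exists a 2^n × 2^n matrix B over K with rank(B) ≤ (max(s/log₂ r, 2))^{c·√(s·log₂ r)} that differs from the truth table matrix M_f in at most 2^{2n}/r entries. -/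
/-!
Let `z : Fin s → Ω → Bool` be the AND gates on `Ω = {0,1}^n × {0,1}^n`, let `|z|` be their count and
put `L = log₂ r`. A product of gates is an AND of coordinates, so its truth table has rank at most
one, and a polynomial of degree at most `D` in the gates has a truth table of rank at most the number
of subsets of `Fin s` of size at most `D` (`aff_pow_le`, `rank_le_of_span`). It therefore suffices to
find a polynomial of degree `O(√(s L))` in the gates that equals `φ(|z|)` outside a set of density
`exp (-L) ≤ 1 / r`; the number of monomials is then estimated in `final_bound`.

Such a polynomial is built by halving (`approx`). Pair up the gates and keep one of each pair. By
Hoeffding and averaging, some choice `w` of half of the gates satisfies `| |z| - 2 |w| | ≤ Δ` with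
`Δ = O(√(s L))`, outside a small set of points (`halve`). For every possible value `v` of `|w|`,
Newton interpolation gives a polynomial `A_v` of degree `2 Δ` in `z` that equals `φ(|z|)` whenever
`|z|` is within `Δ` of `2 v` (`window`). By induction the indicators of the events `|w| = v` agree
with polynomials `G_v` in `w`, hence in `z`, off a common small set. Then `∑ v, G_v A_v` is correct
off the union of the two exceptional sets. The degrees satisfy `D(s) = D(s / 2) + O(√(s L))`, where
`L` grows by one per level to keep the total error below `exp (-L)`, and this sums to `O(√(s L))`.
-/

open scoped Classical
open Finset

noncomputable section

/-! ### Polynomials in Boolean functions and interpolation on a window -/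

/-- The number of indices `i` with `z i ω = true`. -/
def cnt {Ω ι : Type} [Fintype ι] (z : ι → Ω → Bool) (ω : Ω) : ℕ :=
  ∑ i, (z i ω).toNat

/-- The `K`-span of the constant `1` and the indicator functions of the `z i`, inside the algebra of
functions `Ω → K`. Its power `aff K z ^ d` is the space of polynomials of degree at most `d` in
these indicators. -/
def aff (K : Type) [Field K] {Ω ι : Type} (z : ι → Ω → Bool) : Submodule K (Ω → K) :=
  Submodule.span K (insert 1 (Set.range fun i ω => ((z i ω).toNat : K)))

section Poly
variable {K : Type} [Field K] {Ω ι : Type}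

lemma one_le_aff (z : ι → Ω → Bool) : (1 : Submodule K (Ω → K)) ≤ aff K z :=
  Submodule.one_le.2 (Submodule.subset_span (Set.mem_insert _ _))

lemma ind_mem_aff (z : ι → Ω → Bool) (i : ι) :
    (fun ω => ((z i ω).toNat : K)) ∈ aff K z :=
  Submodule.subset_span (Or.inr ⟨i, rfl⟩)

lemma aff_le {κ : Type} (z : ι → Ω → Bool) (w : κ → Ω → Bool)
    (h : ∀ i, (fun ω => ((w i ω).toNat : K)) ∈ aff K z) : aff K w ≤ aff K z := by
  refine Submodule.span_le.2 ?_
  rintro _ (rfl | ⟨i, rfl⟩)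
  · exact Submodule.one_le.1 (one_le_aff z)
  · exact h i

lemma pow_mono_aff (z : ι → Ω → Bool) {a b : ℕ} (h : a ≤ b) : aff K z ^ a ≤ aff K z ^ b :=
  pow_le_pow_right' (one_le_aff z) h

/-- The binomial coefficient of a count is an elementary symmetric polynomial in the indicators. The
proof adds one index at a time by Pascal's rule, which keeps it valid in every characteristic. -/
lemma choose_mem (z : ι → Ω → Bool) (A : Finset ι) :
    ∀ i : ℕ, (fun ω => (((∑ j ∈ A, (z j ω).toNat).choose i : ℕ) : K)) ∈ aff K z ^ i := by
  induction A using Finset.induction_on with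
  | empty =>
    intro i
    rcases i with _ | i
    · simp only [Finset.sum_empty, Nat.choose_self, Nat.cast_one, pow_zero]
      exact Submodule.one_le.1 le_rfl
    · simp only [Finset.sum_empty, Nat.choose_zero_succ, Nat.cast_zero]
      exact (aff K z ^ (i + 1)).zero_mem
  | insert a A ha ih =>
    intro i
    rcases i with _ | i
    · simp only [Nat.choose_zero_right, Nat.cast_one, pow_zero]
      exact Submodule.one_le.1 le_rfl
    · have h := (aff K z ^ (i + 1)).add_mem (ih (i + 1))
        (show _ ∈ aff K z ^ (i + 1) by
          rw [pow_succ]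
          exact Submodule.mul_mem_mul (ih i) (ind_mem_aff z a))
      convert h using 1
      funext ω
      rw [Finset.sum_insert ha]
      cases hz : z a ω
      · simp [hz]
      · have h1 := Nat.choose_succ_succ (∑ j ∈ A, (z j ω).toNat) i
        simp only [Pi.add_apply, Pi.mul_apply, hz, Bool.toNat_true, Nat.cast_one, mul_one]
        rw [add_comm 1, h1, Nat.cast_add, add_comm]

/-- Newton interpolation over an arbitrary field: on a window of length `t`, every function agrees
with a combination of `N.choose 0, …, N.choose t`. The binomials `(N - a).choose i` of the usual
formula based at `a` are rewritten by the Vandermonde identity, with the integer coefficients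
`Ring.choose (-a) j`. -/
lemma interp (φ : ℕ → K) (a t : ℕ) :
    ∃ c : ℕ → K, ∀ N, a ≤ N → N ≤ a + t →
      φ N = ∑ i ∈ range (t + 1), c i * (N.choose i : K) := by
  have key : ∀ N i : ℕ, a ≤ N → (((N - a).choose i : ℕ) : ℤ) =
      ∑ j ∈ range (i + 1), Ring.choose (-(a : ℤ)) (i - j) * (N.choose j : ℤ) := by
    intro N i h
    have h1 := Ring.add_choose_eq (R := ℤ) i (Commute.all (N : ℤ) (-(a : ℤ)))
    rw [Finset.Nat.sum_antidiagonal_eq_sum_range_succ_mk] at h1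
    have h2 : (N : ℤ) + -(a : ℤ) = ((N - a : ℕ) : ℤ) := by push_cast [h]; ring
    rw [h2, Ring.choose_natCast] at h1
    rw [h1]
    refine Finset.sum_congr rfl fun j _ => ?_
    rw [Ring.choose_natCast, mul_comm]
  refine ⟨fun j => ∑ i ∈ range (t + 1), if j ≤ i then
      (fwdDiff 1)^[i] φ a * ((Ring.choose (-(a : ℤ)) (i - j) : ℤ) : K) else 0, ?_⟩
  intro N h1 h2
  have h3 := shift_eq_sum_fwdDiff_iter 1 φ (N - a) a
  have h4 : a + (N - a) • 1 = N := by simp; omega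
  rw [h4] at h3
  have h5 : φ N = ∑ i ∈ range (t + 1), (N - a).choose i • (fwdDiff 1)^[i] φ a := by
    rw [h3]
    refine Finset.sum_subset (by intro x; simp; omega) ?_
    intro x _ hx
    simp only [Finset.mem_range, not_lt] at hx
    rw [Nat.choose_eq_zero_of_lt (by omega), zero_smul]
  rw [h5]
  simp_rw [Finset.sum_mul]
  rw [Finset.sum_comm]
  refine Finset.sum_congr rfl fun i hi => ?_
  have h6 : (((N - a).choose i : ℕ) : K) =
      ∑ j ∈ range (i + 1), ((Ring.choose (-(a : ℤ)) (i - j) : ℤ) : K) * (N.choose j : K) := by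
    have := congrArg (Int.cast : ℤ → K) (key N i h1)
    push_cast at this
    exact this
  rw [nsmul_eq_mul, h6, Finset.sum_mul]
  simp_rw [ite_mul, zero_mul]
  rw [← Finset.sum_filter]
  have h7 : (range (t + 1)).filter (fun j => j ≤ i) = range (i + 1) := by
    ext j; simp at hi ⊢; omega
  rw [h7]
  exact Finset.sum_congr rfl fun j _ => by ring

/-- A symmetric function restricted to the points whose count lies in a window of length `t` is a
polynomial of degree at most `t`. -/
lemma window [Fintype ι] (z : ι → Ω → Bool) (φ : ℕ → K) (a t : ℕ) :
    ∃ F ∈ aff K z ^ t, ∀ ω, a ≤ cnt z ω → cnt z ω ≤ a + t → F ω = φ (cnt z ω) := by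
  obtain ⟨c, hc⟩ := interp φ a t
  refine ⟨∑ i ∈ range (t + 1), c i • fun ω => ((cnt z ω).choose i : K), ?_, ?_⟩
  · refine Submodule.sum_mem _ fun i hi => Submodule.smul_mem _ _ ?_
    exact pow_mono_aff z (by simp at hi; omega) (choose_mem z univ i)
  · intro ω h1 h2
    rw [hc _ h1 h2]
    simp
end Poly

/-! ### Halving the number of variables -/

/-- The moment generating function bound for a sum of independent random signs. -/
lemma hoeff (m : ℕ) (a : Fin m → ℝ) (ha : ∀ i, |a i| ≤ 1) (t : ℝ) :
    ∑ σ : Fin m → Bool, Real.exp (t * ∑ i, (if σ i then a i else - a i)) ≤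
      2 ^ m * Real.exp (m * t ^ 2 / 2) := by
  have h1 : ∑ σ : Fin m → Bool, Real.exp (t * ∑ i, (if σ i then a i else - a i)) =
      ∏ i, ∑ b : Bool, Real.exp (t * (if b then a i else - a i)) := by
    rw [Finset.prod_univ_sum, Fintype.piFinset_univ]
    refine Finset.sum_congr rfl fun σ _ => ?_
    rw [Finset.mul_sum, Real.exp_sum]
  rw [h1]
  have h2 : ∀ i ∈ (univ : Finset (Fin m)),
      ∑ b : Bool, Real.exp (t * (if b then a i else - a i)) ≤ 2 * Real.exp (t ^ 2 / 2) := by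
    intro i _
    have h3 : ∑ b : Bool, Real.exp (t * (if b then a i else - a i)) =
        2 * Real.cosh (t * a i) := by
      rw [Real.cosh_eq]; simp; ring
    rw [h3]
    have h4 := Real.cosh_le_exp_half_sq (t * a i)
    have h5 : (a i) ^ 2 ≤ 1 := (sq_le_one_iff_abs_le_one _).2 (ha i)
    have h6 : Real.exp ((t * a i) ^ 2 / 2) ≤ Real.exp (t ^ 2 / 2) := by
      apply Real.exp_le_exp.2
      nlinarith [sq_nonneg t]
    linarith
  refine (Finset.prod_le_prod (fun i _ => by positivity) h2).trans ?_
  rw [Finset.prod_const, Finset.card_univ, Fintype.card_fin, mul_pow, ← Real.exp_nat_mul]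
  apply le_of_eq
  congr 2
  ring

/-- Hoeffding's inequality, as a count of sign patterns. -/
lemma hoeff_count (m : ℕ) (hm : 0 < m) (a : Fin m → ℝ) (ha : ∀ i, |a i| ≤ 1) (Δ : ℝ)
    (hΔ : 0 ≤ Δ) :
    ((univ.filter fun σ : Fin m → Bool =>
      Δ < |∑ i, (if σ i then a i else - a i)|).card : ℝ) ≤
      2 ^ m * (2 * Real.exp (- (Δ ^ 2 / (2 * m)))) := by
  have hm' : (0 : ℝ) < m := by exact_mod_cast hm
  -- This `t` minimises the exponent `m * t ^ 2 / 2 - t * Δ` of the Chernoff bound.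
  set t : ℝ := Δ / m with ht
  have h1 := hoeff m a ha t
  have h2 := hoeff m a ha (-t)
  have ht0 : 0 ≤ t := by positivity
  have h3 : ((univ.filter fun σ : Fin m → Bool =>
      Δ < |∑ i, (if σ i then a i else - a i)|).card : ℝ) * Real.exp (t * Δ) ≤
      ∑ σ : Fin m → Bool, (Real.exp (t * ∑ i, (if σ i then a i else - a i)) +
        Real.exp (-t * ∑ i, (if σ i then a i else - a i))) := by
    rw [← nsmul_eq_mul, ← Finset.sum_const]
    refine (Finset.sum_le_sum (fun σ hσ => ?_)).trans
      (Finset.sum_le_univ_sum_of_nonneg (fun σ => by positivity))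
    simp only [Finset.mem_filter, Finset.mem_univ, true_and] at hσ
    rcases lt_abs.1 hσ with h | h
    · have := Real.exp_le_exp.2 (mul_le_mul_of_nonneg_left h.le ht0)
      have h' := Real.exp_pos (-t * ∑ i, (if σ i then a i else - a i))
      linarith
    · have := Real.exp_le_exp.2 (mul_le_mul_of_nonneg_left h.le ht0)
      rw [mul_neg, ← neg_mul] at this
      have h' := Real.exp_pos (t * ∑ i, (if σ i then a i else - a i))
      linarith
  rw [Finset.sum_add_distrib] at h3
  rw [neg_sq] at h2
  have h4 : Real.exp (m * t ^ 2 / 2) =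
      Real.exp (-(Δ ^ 2 / (2 * m))) * Real.exp (t * Δ) := by
    rw [← Real.exp_add]; congr 1; rw [ht]; field_simp; ring
  rw [h4] at h1 h2
  refine le_of_mul_le_mul_right ?_ (Real.exp_pos (t * Δ))
  linarith

/-- Among `2 * m` Boolean functions one can select `m` whose count, doubled, is within `Δ` of the
full count except on a small fraction of `Ω`. The indices are paired and one index of each pair is
chosen at random: at each point the deviation is a sum of `m` random signs with coefficients in
`{-1, 0, 1}`, so Hoeffding applies, and averaging over the choices yields a good one. The truncated
subtraction in the lower end of the window is harmless since counts are nonnegative. -/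
lemma halve {Ω ι : Type} [Fintype Ω] [Fintype ι] (m : ℕ) (hm : 0 < m) (hι : Fintype.card ι = 2 * m)
    (z : ι → Ω → Bool) (Δ : ℕ) :
    ∃ f : Fin m → ι, ((univ.filter fun ω : Ω =>
      ¬ (2 * cnt (fun i => z (f i)) ω - Δ ≤ cnt z ω ∧
        cnt z ω ≤ 2 * cnt (fun i => z (f i)) ω + Δ)).card : ℝ) ≤
      2 * Real.exp (- ((Δ : ℝ) ^ 2 / (2 * m))) * Fintype.card Ω := by
  let e : Bool × Fin m ≃ ι := Fintype.equivOfCardEq (by simp [hι])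
  set bad : (Fin m → Bool) → Ω → Prop := fun σ ω =>
    ¬ (2 * cnt (fun i => z (e (σ i, i))) ω - Δ ≤ cnt z ω ∧
        cnt z ω ≤ 2 * cnt (fun i => z (e (σ i, i))) ω + Δ) with hbad
  set q : ℝ := 2 * Real.exp (- ((Δ : ℝ) ^ 2 / (2 * m))) with hq
  suffices ∃ σ : Fin m → Bool, ((univ.filter fun ω => bad σ ω).card : ℝ) ≤ q * Fintype.card Ω by
    obtain ⟨σ, hσ⟩ := this
    exact ⟨fun i => e (σ i, i), hσ⟩
  have hω : ∀ ω : Ω, ((univ.filter fun σ => bad σ ω).card : ℝ) ≤ 2 ^ m * q := by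
    intro ω
    let a : Fin m → ℝ := fun i => ((z (e (true, i)) ω).toNat : ℝ) - (z (e (false, i)) ω).toNat
    have ha : ∀ i, |a i| ≤ 1 := by
      intro i
      simp only [a]
      cases z (e (true, i)) ω <;> cases z (e (false, i)) ω <;> simp
    refine le_trans ?_ (hoeff_count m hm a ha Δ (by positivity))
    have hsub : (univ.filter fun σ => bad σ ω) ⊆ (univ.filter fun σ : Fin m → Bool =>
      (Δ : ℝ) < |∑ i, (if σ i then a i else - a i)|) := by
      intro σ hσ
      simp only [Finset.mem_filter, Finset.mem_univ, true_and, hbad] at hσ ⊢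
      contrapose! hσ
      have hs : ∑ i, (if σ i then a i else - a i) =
          2 * (cnt (fun i => z (e (σ i, i))) ω : ℝ) - cnt z ω := by
        have h1 : cnt z ω = ∑ i, ((z (e (true, i)) ω).toNat + (z (e (false, i)) ω).toNat) := by
          unfold cnt
          rw [← e.sum_comp, Fintype.sum_prod_type, Fintype.sum_bool, Finset.sum_add_distrib]
        rw [h1]
        unfold cnt
        push_cast
        rw [Finset.mul_sum, ← Finset.sum_sub_distrib]
        refine Finset.sum_congr rfl fun i _ => ?_
        cases h : σ i <;> simp [a] <;> ring
      rw [hs, abs_le] at hσ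
      obtain ⟨h1, h2⟩ := hσ
      constructor
      · rw [tsub_le_iff_right]
        have : (2 * (cnt (fun i => z (e (σ i, i))) ω : ℝ)) ≤ cnt z ω + Δ := by linarith
        exact_mod_cast this
      · have : (cnt z ω : ℝ) ≤ 2 * cnt (fun i => z (e (σ i, i))) ω + Δ := by linarith
        exact_mod_cast this
    exact_mod_cast Finset.card_le_card hsub
  by_contra hcon
  simp only [not_exists, not_le] at hcon
  have h1 : ∑ σ : Fin m → Bool, ((univ.filter fun ω => bad σ ω).card : ℝ) =
      ∑ ω : Ω, ((univ.filter fun σ => bad σ ω).card : ℝ) := by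
    have := Finset.sum_card_bipartiteAbove_eq_sum_card_bipartiteBelow
      (s := (univ : Finset (Fin m → Bool))) (t := (univ : Finset Ω)) bad
    simp only [Finset.bipartiteAbove, Finset.bipartiteBelow] at this
    exact_mod_cast this
  have h2 : ∑ ω : Ω, ((univ.filter fun σ => bad σ ω).card : ℝ) ≤
      Fintype.card Ω * (2 ^ m * q) := by
    refine (Finset.sum_le_sum fun ω _ => hω ω).trans ?_
    simp
  have h3 : ∑ σ : Fin m → Bool, (q * Fintype.card Ω : ℝ) <
      ∑ σ : Fin m → Bool, ((univ.filter fun ω => bad σ ω).card : ℝ) :=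
    Finset.sum_lt_sum_of_nonempty Finset.univ_nonempty fun σ _ => hcon σ
  rw [h1] at h3
  simp at h3
  linarith

lemma cnt_le {Ω ι : Type} [Fintype ι] (z : ι → Ω → Bool) (ω : Ω) :
    cnt z ω ≤ Fintype.card ι := by
  unfold cnt
  refine (Finset.sum_le_sum fun i _ => Bool.toNat_le (z i ω)).trans ?_
  simp

/-! ### Low-degree approximation of symmetric functions -/

/-- The degree recursion. The shift by `9` makes the increase of `L` by one at each level cheaper
than the gain of a factor `√2` from halving. -/
lemma deg_step (k : ℕ) (L : ℝ) (hL : 1 ≤ L) :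
    14 * √(2 ^ k * (L + 1 + 9)) + 2 * (√(2 ^ (k + 1) * (L + 2)) + 1) ≤
      14 * √(2 ^ (k + 1) * (L + 9)) := by
  have hk : (1 : ℝ) ≤ 2 ^ k := one_le_pow₀ (by norm_num)
  have hsqrt : ∀ c : ℝ, √((2 : ℝ) ^ k * c) = √((2 : ℝ) ^ k) * √c := Real.sqrt_mul (by positivity)
  rw [pow_succ, mul_assoc, mul_assoc, hsqrt, hsqrt, hsqrt]
  set u := √((2 : ℝ) ^ k)
  have hu : 1 ≤ u := Real.one_le_sqrt.2 hk
  set p := √(L + 9) with hp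
  have hp2 : p ^ 2 = L + 9 := Real.sq_sqrt (by linarith)
  have hp0 : 3 ≤ p := Real.le_sqrt_of_sq_le (by linarith)
  have h1 : √(L + 1 + 9) ≤ 1.05 * p :=
    Real.sqrt_le_iff.2 ⟨by linarith, by rw [mul_pow, hp2]; linarith⟩
  have h2 : √(2 * (L + 2)) ≤ 1.415 * p :=
    Real.sqrt_le_iff.2 ⟨by linarith, by rw [mul_pow, hp2]; linarith⟩
  have h3 : 1.41 * p ≤ √(2 * (L + 9)) :=
    Real.le_sqrt_of_sq_le (by rw [mul_pow, hp2]; linarith)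
  have h4 : 14 * √(L + 1 + 9) + 2 * √(2 * (L + 2)) + 2 ≤ 14 * √(2 * (L + 9)) := by linarith
  nlinarith

lemma err_step (L a : ℝ) (h : L + 2 ≤ a) :
    2 * Real.exp (-a) + Real.exp (-(L + 1)) ≤ Real.exp (-L) := by
  have h1 : Real.exp (-a) ≤ Real.exp (-L) * (Real.exp (-1) * Real.exp (-1)) := by
    rw [← Real.exp_add, ← Real.exp_add]
    exact Real.exp_le_exp.2 (by linarith)
  have h2 : Real.exp (-(L + 1)) = Real.exp (-L) * Real.exp (-1) := by
    rw [← Real.exp_add]; congr 1; ring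
  have h3 : Real.exp (-1) ≤ 1 / 2 := by
    rw [Real.exp_neg, inv_le_comm₀ (Real.exp_pos _) (by norm_num)]
    have := Real.exp_one_gt_d9
    norm_num
    linarith
  have h4 := Real.exp_pos (-L)
  have h5 := Real.exp_pos (-1)
  have h6 : 2 * (Real.exp (-1) * Real.exp (-1)) + Real.exp (-1) ≤ 1 := by nlinarith
  rw [h2]
  nlinarith

/-- Symmetric functions of `2 ^ k` Boolean functions agree with polynomials of degree
`O(√(2 ^ k * L))` off an exceptional set of density at most `exp (-L)`. The exceptional set does not
depend on `φ`; the induction uses this for the indicators of all values of the smaller count at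
once. -/
theorem approx (K : Type) [Field K] {Ω : Type} [Fintype Ω] (k : ℕ) :
    ∀ L : ℝ, 1 ≤ L → ∀ (ι : Type) [Fintype ι], Fintype.card ι = 2 ^ k → ∀ z : ι → Ω → Bool,
      ∃ D : ℕ, (D : ℝ) ≤ 14 * √(2 ^ k * (L + 9)) ∧
      ∃ E : Finset Ω, (E.card : ℝ) ≤ Real.exp (-L) * Fintype.card Ω ∧
        ∀ φ : ℕ → K, ∃ F ∈ aff K z ^ D, ∀ ω ∉ E, F ω = φ (cnt z ω) := by
  induction k with
  | zero =>
    intro L hL ι _ hι z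
    refine ⟨1, ?_, ∅, by simp; positivity, fun φ => ?_⟩
    · have : 1 ≤ √(2 ^ 0 * (L + 9)) := Real.one_le_sqrt.2 (by norm_num; linarith)
      push_cast
      linarith
    · obtain ⟨F, hF, h⟩ := window z φ 0 1
      refine ⟨F, hF, fun ω _ => h ω (Nat.zero_le _) ?_⟩
      have := cnt_le z ω
      rw [hι] at this
      simpa using this
  | succ k ih =>
    intro L hL ι _ hι z
    set Δ : ℕ := ⌈√((2 : ℝ) ^ (k + 1) * (L + 2))⌉₊ with hΔ
    obtain ⟨f, hf⟩ := halve (2 ^ k) (by positivity) (by rw [hι]; ring) z Δ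
    obtain ⟨D, hD, E, hE, H⟩ := ih (L + 1) (by linarith) (Fin (2 ^ k)) (by simp)
      (fun i => z (f i))
    set w : Fin (2 ^ k) → Ω → Bool := fun i => z (f i) with hw
    have hwz : aff K w ≤ aff K z := aff_le z w fun i => ind_mem_aff z (f i)
    refine ⟨D + 2 * Δ, ?_, (univ.filter fun ω : Ω =>
      ¬ (2 * cnt w ω - Δ ≤ cnt z ω ∧ cnt z ω ≤ 2 * cnt w ω + Δ)) ∪ E, ?_, fun φ => ?_⟩
    · have h1 := deg_step k L hL
      have h2 : (Δ : ℝ) ≤ √((2 : ℝ) ^ (k + 1) * (L + 2)) + 1 :=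
        (Nat.ceil_lt_add_one (Real.sqrt_nonneg _)).le
      push_cast
      linarith
    · have h1 : L + 2 ≤ (Δ : ℝ) ^ 2 / (2 * ((2 ^ k : ℕ) : ℝ)) := by
        rw [le_div_iff₀ (by positivity)]
        have h2 : (2 : ℝ) ^ (k + 1) * (L + 2) ≤ (Δ : ℝ) ^ 2 :=
          (Real.sqrt_le_left (by positivity)).1 (Nat.le_ceil _)
        push_cast
        rw [pow_succ] at h2
        linarith
      have h3 := err_step L _ h1
      have h4 : (0 : ℝ) ≤ Fintype.card Ω := by positivity
      refine (Nat.cast_le.2 (Finset.card_union_le _ _)).trans ?_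
      push_cast at hf hE h3 ⊢
      nlinarith
    · -- `G v` detects that the halved count is `v`; `A v` is correct on the window around `2 * v`.
      choose G hG hG' using fun v : ℕ => H (fun c => if c = v then 1 else 0)
      choose A hA hA' using fun v : ℕ => window (K := K) z φ (2 * v - Δ) (2 * Δ)
      refine ⟨∑ v ∈ range (2 ^ k + 1), G v * A v, Submodule.sum_mem _ fun v _ => ?_, ?_⟩
      · rw [pow_add]
        exact Submodule.mul_mem_mul (pow_le_pow_left' hwz D (hG v)) (hA v)
      · intro ω hω
        simp only [Finset.mem_union, Finset.mem_filter, Finset.mem_univ, true_and, not_or,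
          not_not] at hω
        obtain ⟨⟨h1, h2⟩, h3⟩ := hω
        have h4 : cnt w ω ∈ range (2 ^ k + 1) := by
          have := cnt_le w ω
          simp only [Fintype.card_fin] at this
          simp; omega
        rw [Finset.sum_apply, Finset.sum_eq_single_of_mem _ h4]
        · simp only [Pi.mul_apply]
          rw [hG' _ ω h3, if_pos rfl, one_mul]
          exact hA' _ ω h1 (by omega)
        · intro v _ hv
          simp only [Pi.mul_apply]
          rw [hG' _ ω h3, if_neg hv.symm, zero_mul]

/-! ### From degree to rank -/

/-- Since indicators are idempotent, polynomials of degree at most `D` are spanned by multilinear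
monomials. -/
lemma aff_pow_le {K : Type} [Field K] {Ω ι : Type} (z : ι → Ω → Bool) (D : ℕ) :
    aff K z ^ D ≤ Submodule.span K (Set.range fun (J : {J : Finset ι // J.card ≤ D}) (ω : Ω) =>
      ∏ j ∈ J.1, ((z j ω).toNat : K)) := by
  induction D with
  | zero =>
    rw [pow_zero, Submodule.one_le]
    refine Submodule.subset_span ⟨⟨∅, by simp⟩, ?_⟩
    funext ω
    simp
  | succ D ih =>
    rw [pow_succ]
    refine (mul_le_mul' ih le_rfl).trans ?_
    rw [aff, Submodule.span_mul_span, Submodule.span_le]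
    rintro _ ⟨_, ⟨J, rfl⟩, _, (rfl | ⟨i, rfl⟩), rfl⟩
    · refine Submodule.subset_span ⟨⟨J.1, J.2.trans (by omega)⟩, ?_⟩
      funext ω
      simp
    · refine Submodule.subset_span ⟨⟨insert i J.1, (Finset.card_insert_le _ _).trans
        (by have := J.2; omega)⟩, ?_⟩
      funext ω
      simp only [Pi.mul_apply]
      by_cases h : i ∈ J.1
      · rw [Finset.insert_eq_of_mem h, ← Finset.mul_prod_erase _ _ h]
        cases z i ω <;> simp
      · rw [Finset.prod_insert h, mul_comm]

lemma rank_le_of_span {K X I : Type} [Field K] [Fintype X] [Fintype I] (a b : I → X → K)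
    (F : X × X → K)
    (hF : F ∈ Submodule.span K (Set.range fun (J : I) (p : X × X) => a J p.1 * b J p.2)) :
    (Matrix.of fun x y : X => F (x, y)).rank ≤ Fintype.card I := by
  obtain ⟨c, rfl⟩ := (Submodule.mem_span_range_iff_exists_fun K).1 hF
  have h : (Matrix.of fun x y : X =>
      (∑ J, c J • fun p : X × X => a J p.1 * b J p.2) (x, y)) =
      (Matrix.of fun (x : X) (J : I) => c J * a J x) * (Matrix.of fun (J : I) (y : X) => b J y) := by
    ext x y
    simp [Matrix.mul_apply, mul_assoc]
  rw [h]
  exact (Matrix.rank_mul_le_left _ _).trans (Matrix.rank_le_card_width _)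

/-- The Chernoff-type bound for the number of subsets of size at most `D`, with free parameter
`x`. -/
lemma card_small_le (s D : ℕ) (x : ℝ) (hx : 0 < x) (hx1 : x ≤ 1) :
    (Fintype.card {J : Finset (Fin s) // J.card ≤ D} : ℝ) ≤ x⁻¹ ^ D * (1 + x) ^ s := by
  have h := Fintype.sum_pow_mul_eq_add_pow (Fin s) x 1
  simp only [one_pow, mul_one, Fintype.card_fin] at h
  rw [add_comm 1 x, ← h, inv_pow, ← div_eq_inv_mul, le_div_iff₀ (by positivity),
    Fintype.card_subtype, ← nsmul_eq_mul, ← Finset.sum_const]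
  refine (Finset.sum_le_sum fun J hJ => ?_).trans
    (Finset.sum_le_univ_sum_of_nonneg fun J => by positivity)
  exact pow_le_pow_of_le_one hx.le hx1 (by simpa using hJ)

/-- The number of monomials of degree `O(√(s * L))`, bounded by taking `x = 1` in `card_small_le`
if `s ≤ L` and `x = √(L / s)` otherwise. -/
lemma final_bound (s D : ℕ) (hs : 0 < s) (L : ℝ) (hL : 1 ≤ L) (hD : (D : ℝ) ≤ 63 * √(s * L)) :
    (Fintype.card {J : Finset (Fin s) // J.card ≤ D} : ℝ) ≤
      (max ((s : ℝ) / L) 2) ^ (40 * √(s * L)) := by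
  have hs' : (0 : ℝ) < s := by exact_mod_cast hs
  have hL0 : 0 < L := by linarith
  set M := max ((s : ℝ) / L) 2 with hM
  have hM2 : 2 ≤ M := le_max_right _ _
  set q := √(s * L) with hq
  have hq0 : 0 ≤ q := Real.sqrt_nonneg _
  rcases le_total (s : ℝ) L with h | h
  · refine (card_small_le s D 1 one_pos le_rfl).trans ?_
    have h1 : (s : ℝ) ≤ q := Real.le_sqrt_of_sq_le (by nlinarith)
    calc (1 : ℝ)⁻¹ ^ D * (1 + 1) ^ s = (2 : ℝ) ^ (s : ℝ) := by norm_num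
      _ ≤ M ^ (s : ℝ) := Real.rpow_le_rpow (by norm_num) hM2 (by positivity)
      _ ≤ M ^ (40 * q) := Real.rpow_le_rpow_of_exponent_le (by linarith) (by linarith)
  · have hx : 0 < √(L / s) := Real.sqrt_pos.2 (by positivity)
    refine (card_small_le s D √(L / s) hx (Real.sqrt_le_one.2 ((div_le_one hs').2 h))).trans ?_
    have h1 : (√(L / s))⁻¹ ^ D ≤ M ^ (63 / 2 * q) := by
      have h2 : (√(L / s))⁻¹ ≤ M ^ (1 / 2 : ℝ) := by
        rw [← Real.sqrt_inv, inv_div, Real.sqrt_eq_rpow]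
        exact Real.rpow_le_rpow (by positivity) (le_max_left _ _) (by norm_num)
      calc (√(L / s))⁻¹ ^ D ≤ (M ^ (1 / 2 : ℝ)) ^ D := pow_le_pow_left₀ (by positivity) h2 _
        _ = M ^ (1 / 2 * (D : ℝ)) := by rw [← Real.rpow_natCast, ← Real.rpow_mul (by linarith)]
        _ ≤ M ^ (63 / 2 * q) := Real.rpow_le_rpow_of_exponent_le (by linarith) (by linarith)
    have h3 : (1 + √(L / s)) ^ s ≤ M ^ (2 * q) := by
      have h4 : (s : ℝ) * √(L / s) = q := by
        rw [hq]
        symm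
        rw [Real.sqrt_eq_iff_mul_self_eq (by positivity) (by positivity)]
        rw [mul_mul_mul_comm, Real.mul_self_sqrt (by positivity)]
        field_simp
      have h5 : Real.exp 1 ≤ M ^ (2 : ℝ) := by
        have := Real.exp_one_lt_d9
        rw [Real.rpow_two]
        nlinarith
      calc (1 + √(L / s)) ^ s ≤ Real.exp (√(L / s)) ^ s := by
            refine pow_le_pow_left₀ (by positivity) ?_ _
            rw [add_comm]; exact Real.add_one_le_exp _
        _ = Real.exp 1 ^ q := by rw [← Real.exp_nat_mul, h4, ← Real.exp_mul, one_mul]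
        _ ≤ (M ^ (2 : ℝ)) ^ q := Real.rpow_le_rpow (by positivity) h5 hq0
        _ = M ^ (2 * q) := by rw [← Real.rpow_mul (by linarith)]
    calc _ ≤ M ^ (63 / 2 * q) * M ^ (2 * q) := by gcongr
      _ = M ^ (63 / 2 * q + 2 * q) := by rw [Real.rpow_add (by linarith)]
      _ ≤ M ^ (40 * q) := Real.rpow_le_rpow_of_exponent_le (by linarith) (by linarith)

/-! ### Truth tables of SYM ∘ AND circuits -/

/-- Rigidity upper bound for truth tables of SYM ∘ AND circuits. -/
theorem sym_and_rigidity_upper :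
    ∃ c : ℝ, 0 < c ∧
      ∀ (K : Type) [Field K], ∀ n s : ℕ, 1 ≤ n → 2 ≤ s →
        ∀ (S : Fin s → Finset (Fin n ⊕ Fin n)) (φ : ℕ → K),
          ∀ r : ℕ, 2 ≤ r → r ≤ 2 ^ (2 * n) →
            ∃ B : Matrix (Fin n → Bool) (Fin n → Bool) K,
              (B.rank : ℝ) ≤
                (max ((s : ℝ) / Real.logb 2 r) 2) ^ (c * Real.sqrt (s * Real.logb 2 r)) ∧
              (diffCount B (Matrix.of fun x y : Fin n → Bool =>
                  φ (Nat.card {j : Fin s // ∀ i ∈ S j, Sum.elim x y i = true})) : ℝ) ≤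
                2 ^ (2 * (n : ℝ)) / r := by
  refine ⟨40, by norm_num, ?_⟩
  intro K _ n s hn hs S φ r hr _
  have hs0 : 0 < s := by omega
  have hr0 : (0 : ℝ) < r := by positivity
  have hr2 : (2 : ℝ) ≤ r := by exact_mod_cast hr
  set L := Real.logb 2 r with hL_def
  have hL : 1 ≤ L := by
    rw [hL_def, Real.le_logb_iff_rpow_le (by norm_num) hr0]
    simpa using hr2
  have hexp : Real.exp (-L) ≤ 1 / r := by
    have h1 : Real.log r ≤ L := by
      rw [hL_def, Real.logb, le_div_iff₀ (Real.log_pos (by norm_num))]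
      have h2 : 0 ≤ Real.log r := Real.log_nonneg (by linarith)
      have h3 : Real.log 2 ≤ 1 := by linarith [Real.log_two_lt_d9]
      nlinarith
    rw [Real.exp_neg, one_div]
    refine inv_anti₀ hr0 ?_
    rw [← Real.exp_log hr0]
    exact Real.exp_le_exp.2 h1
  let Ω := (Fin n → Bool) × (Fin n → Bool)
  let z : Fin s → Ω → Bool := fun j p => decide (∀ i ∈ S j, Sum.elim p.1 p.2 i = true)
  -- The gates are padded with constantly false ones to a power of two.
  set k := Nat.log 2 s + 1 with hk
  have hsk : s ≤ 2 ^ k := (Nat.lt_pow_succ_log_self (by norm_num) s).le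
  have hks : 2 ^ k ≤ 2 * s := by
    have := Nat.pow_log_le_self 2 hs0.ne'
    rw [hk, pow_succ]; omega
  let w : Fin s ⊕ Fin (2 ^ k - s) → Ω → Bool := Sum.elim z fun _ _ => false
  obtain ⟨D, hD, E, hE, H⟩ := approx K k L hL (Fin s ⊕ Fin (2 ^ k - s)) (by simp; omega) w
  obtain ⟨F, hF, hFE⟩ := H φ
  have hcnt : ∀ p : Ω, cnt w p =
      Nat.card {j : Fin s // ∀ i ∈ S j, Sum.elim p.1 p.2 i = true} := by
    intro p
    rw [Nat.card_eq_fintype_card, Fintype.card_subtype, Finset.card_filter]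
    simp only [cnt, Fintype.sum_sum_type, w, z, Sum.elim_inl, Sum.elim_inr, Bool.toNat_false,
      Finset.sum_const_zero, add_zero]
    refine Finset.sum_congr rfl fun j _ => ?_
    by_cases h : ∀ i ∈ S j, Sum.elim p.1 p.2 i = true
    · rw [if_pos h, decide_eq_true h, Bool.toNat_true]
    · rw [if_neg h, decide_eq_false h, Bool.toNat_false]
  have hwz : aff K w ≤ aff K z := by
    refine aff_le z w ?_
    rintro (i | i)
    · exact ind_mem_aff z i
    · simp only [w, Sum.elim_inr, Bool.toNat_false, Nat.cast_zero]
      exact (aff K z).zero_mem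
  have hspan := aff_pow_le z D (pow_le_pow_left' hwz D hF)
  refine ⟨Matrix.of fun x y => F (x, y), ?_, ?_⟩
  · have hDq : (D : ℝ) ≤ 63 * √(s * L) := by
      refine hD.trans ?_
      have h1 : √((2 : ℝ) ^ k * (L + 9)) ≤ 4.5 * √(s * L) := by
        refine Real.sqrt_le_iff.2 ⟨by positivity, ?_⟩
        rw [mul_pow, Real.sq_sqrt (by positivity)]
        have h2 : (2 : ℝ) ^ k ≤ 2 * s := by exact_mod_cast hks
        have h3 : (0 : ℝ) < s := by exact_mod_cast hs0
        calc (2 : ℝ) ^ k * (L + 9) ≤ (2 * s) * (10 * L) := by gcongr; linarith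
          _ ≤ 4.5 ^ 2 * (s * L) := by nlinarith [mul_pos h3 (by linarith : 0 < L)]
      linarith
    refine le_trans (Nat.cast_le.2 ?_) (final_bound s D hs0 L hL hDq)
    refine rank_le_of_span
      (fun J x => ∏ j ∈ J.1, if ∀ i, Sum.inl i ∈ S j → x i = true then (1 : K) else 0)
      (fun J y => ∏ j ∈ J.1, if ∀ i, Sum.inr i ∈ S j → y i = true then (1 : K) else 0) F ?_
    -- An AND of coordinates of `(x, y)` factors as an AND in `x` times an AND in `y`.
    convert hspan using 4 with J
    funext p
    rw [← Finset.prod_mul_distrib]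
    refine Finset.prod_congr rfl fun j _ => ?_
    have hz : z j p = true ↔ (∀ i, Sum.inl i ∈ S j → p.1 i = true) ∧
        ∀ i, Sum.inr i ∈ S j → p.2 i = true := by
      simp only [z, decide_eq_true_iff, Sum.forall, Sum.elim_inl, Sum.elim_inr]
    by_cases h : z j p = true
    · rw [if_pos (hz.1 h).1, if_pos (hz.1 h).2, h, Bool.toNat_true, Nat.cast_one, mul_one]
    · rw [(Bool.not_eq_true _).mp h, Bool.toNat_false, Nat.cast_zero]
      rcases not_and_or.1 (mt hz.2 h) with h' | h'
      · rw [if_neg h', zero_mul]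
      · rw [if_neg h', mul_zero]
  · have h1 : diffCount (Matrix.of fun x y => F (x, y)) (Matrix.of fun x y : Fin n → Bool =>
        φ (Nat.card {j : Fin s // ∀ i ∈ S j, Sum.elim x y i = true})) ≤ E.card := by
      unfold diffCount
      rw [← Fintype.card_coe, ← Nat.card_eq_fintype_card]
      refine Nat.card_le_card_of_injective (fun p => ⟨p.1, ?_⟩)
        fun p q hpq => Subtype.ext (congrArg (fun e : E => e.1) hpq)
      by_contra hpE
      exact p.2 ((hFE p.1 hpE).trans (by rw [hcnt]; rfl))
    have h2 : (Fintype.card Ω : ℝ) = 2 ^ (2 * (n : ℝ)) := by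
      have : Fintype.card Ω = 2 ^ (2 * n) := by simp [Ω]; ring
      rw [this]
      push_cast
      rw [← Real.rpow_natCast]
      push_cast
      rfl
    rw [h2] at hE
    calc _ ≤ (E.card : ℝ) := Nat.cast_le.2 h1
      _ ≤ Real.exp (-L) * 2 ^ (2 * (n : ℝ)) := hE
      _ ≤ 1 / r * 2 ^ (2 * (n : ℝ)) := by gcongr
      _ = _ := by ring
end
end
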